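/- Let m, n ∈ ℤ with 1 ≤ |m| ≤ |n| and |n| ≥ 2, and let BS(m,n) = ⟨a, b | b^{-1} a^m b = a^n⟩ be the Baumslag–Solitar group. Then no Cayley graph of BS(m,n) (with respect to a finite symmetric generating set) coarsely embeds into any δ-hyperbolic connected graph of uniformly bounded degree. In particular, BS(m,n) does not coarsely embed into any hyperbolic group. -/

import Mathlib

/-!
The obstruction is the one used in coarse geometry under the name of *fat bigons*.

A hyperbolic graph `Y` has no fat bigons: if two discrete paths join `y₀` to `y`, with bounded
steps and with length at most `Λ * d(y₀, y)`, then, as soon as `d(y₀, y)` is large, they come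
`s`-close to each other at a place far from both `y₀` and `y`, where `s` depends only on `Y`, `Λ`
and the bound on the steps (`no_fat_bigon`). Only Gromov's four-point inequality (`four_point`) is
used: along a geodesic from `y₀` to `y`, the part of a path lying high above the geodesic makes
slow progress for its number of steps, so that two paths of linear length must both be
close to the geodesic above some common point.

On the other hand `BS(m,n)` contains exponentially many bigons whose sides stay apart
(`exists_bigons`). They are the rectangles `a ^ p * L = L * a ^ p`, where the word `L` has linear
length, and where the power of `a` which crosses a prefix of `L` becomes large away from the two
ends of `L`, or is large throughout; this is `BSTransparent`. By Britton's lemma (`signs_eq`,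
deduced from the normal form theorem for HNN extensions) the two sides can only be close near the
corners `1` and `X = L * a ^ p`. When `2 ≤ |m|`, products of `N` blocks `b a b⁻¹ a` or `b⁻¹ a b a`
serve as `L`; when `|m| = 1`, one goes up along `b ^ (N + 1)` and down along a word
`b⁻¹ a ^ e₁ b⁻¹ a ^ e₂ ⋯` with digits `0, 1`. Either way there are `2 ^ N` distinct corners `X`.

A coarse embedding `f` has fibres of bounded diameter and balls of `Y` grow at most
exponentially, so one of the `2 ^ N` corners `X` is mapped at distance proportional to `N` from
`f 1` (`exists_image_far`). The image of its bigon is then a fat bigon of `Y`, a contradiction.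
-/

open SimpleGraph

/-- A graph has uniformly bounded degree if there is a uniform finite bound on
the cardinality of all neighbour sets. -/
def BddDegree {V : Type*} (G : SimpleGraph V) : Prop :=
  ∃ D : ℕ, ∀ v : V, (G.neighborSet v).encard ≤ D

/-- A walk is geodesic if its length realizes the graph distance between its endpoints. -/
def SimpleGraph.Walk.IsGeodesic {V : Type*} {G : SimpleGraph V} {x y : V}
    (w : G.Walk x y) : Prop :=
  w.length = G.dist x y

/-- A graph is `δ`-hyperbolic if each side of every geodesic triangle is contained in the
closed `δ`-neighbourhood of the union of the other two sides. -/
def GraphHyperbolic {V : Type*} (G : SimpleGraph V) (δ : ℝ) : Prop :=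
  ∀ ⦃a b c : V⦄ (γ₁ : G.Walk a b) (γ₂ : G.Walk b c) (γ₃ : G.Walk c a),
    γ₁.IsGeodesic → γ₂.IsGeodesic → γ₃.IsGeodesic →
      ∀ u ∈ γ₁.support, ∃ v, (v ∈ γ₂.support ∨ v ∈ γ₃.support) ∧ (G.dist u v : ℝ) ≤ δ

/-- `x` admits an `(L,s,C)`-bigon with respect to the basepoint `x₀`: two paths from `x₀`
to `x`, each of length at most `L·d(x₀,x)`, such that any vertex of the first path outside
the `C`-neighbourhood of `{x₀, x}` is at distance more than `s` from any vertex of the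
second path outside that neighbourhood. -/
def IsBigonAt {V : Type*} (G : SimpleGraph V) (x₀ : V) (L s C : ℝ) (x : V) : Prop :=
  ∃ α₁ α₂ : G.Walk x₀ x,
    ((α₁.length : ℝ) ≤ L * G.dist x₀ x) ∧ ((α₂.length : ℝ) ≤ L * G.dist x₀ x) ∧
    ∀ u ∈ α₁.support, ∀ v ∈ α₂.support,
      (C < (G.dist x₀ u : ℝ) ∧ C < (G.dist x u : ℝ)) →
      (C < (G.dist x₀ v : ℝ) ∧ C < (G.dist x v : ℝ)) →
      s < (G.dist u v : ℝ)

/-- The set `B^X(L,s,C)` of vertices admitting an `(L,s,C)`-bigon. -/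
def bigonSet {V : Type*} (G : SimpleGraph V) (x₀ : V) (L s C : ℝ) : Set V :=
  {x | IsBigonAt G x₀ L s C x}

/-- The closed ball of radius `n` about `x` in the graph metric. -/
def gBall {V : Type*} (G : SimpleGraph V) (x : V) (n : ℕ) : Set V :=
  {v | G.dist x v ≤ n}

/-- `X` has exponentially many fat bigons at `x₀`. -/
def HasExpManyFatBigons {V : Type*} (G : SimpleGraph V) (x₀ : V) : Prop :=
  ∃ s₀ c L : ℝ, 0 ≤ s₀ ∧ 1 < c ∧ 1 < L ∧
    ∀ s : ℝ, s₀ ≤ s → ∃ C : ℝ, 0 ≤ C ∧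
      {n : ℕ | (c ^ n : ℝ) ≤ ((bigonSet G x₀ L s C ∩ gBall G x₀ n).ncard : ℝ)}.Infinite

/-- `X` has no fat bigons at `x₀`. -/
def HasNoFatBigons {V : Type*} (G : SimpleGraph V) (x₀ : V) : Prop :=
  ∀ L : ℝ, 1 ≤ L → ∃ s : ℝ, 0 ≤ s ∧ ∀ C : ℝ, 0 ≤ C →
    ∃ R : ℕ, ∀ x ∈ bigonSet G x₀ L s C, G.dist x₀ x ≤ R

/-- A coarse embedding of the graph `G` into the graph `H`, with multiplicative constant `K`
and compression function `ρ`. -/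
def IsCoarseEmbedding {V W : Type*} (G : SimpleGraph V) (H : SimpleGraph W)
    (f : V → W) (K : ℝ) (ρ : ℕ → ℕ) : Prop :=
  1 ≤ K ∧ Filter.Tendsto ρ Filter.atTop Filter.atTop ∧
    ∀ x y : V, (ρ (G.dist x y) : ℝ) ≤ (H.dist (f x) (f y) : ℝ) ∧
      (H.dist (f x) (f y) : ℝ) ≤ K * (G.dist x y : ℝ)

/-- The Cayley graph of a group with respect to a (symmetric) set `S`. -/
def cayleyGraph (G : Type*) [Group G] (S : Set G) : SimpleGraph G :=
  SimpleGraph.fromRel (fun x y => x⁻¹ * y ∈ S)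

/-- The Cayley graph of `G` w.r.t. the basepoint `1` has exponential growth:
`|B_n(1)|^(1/n)` converges to a limit `> 1`. -/
def HasExpGrowth {V : Type*} (G : SimpleGraph V) (x₀ : V) : Prop :=
  ∃ a : ℝ, 1 < a ∧
    Filter.Tendsto (fun n : ℕ => ((gBall G x₀ n).ncard : ℝ) ^ ((n : ℝ)⁻¹))
      Filter.atTop (nhds a)

/-- `Div_X(n) ≤ M`: for all vertices `a b` with `d(a,b) ≤ n` and every `c ∉ {a, b}`, there is
a path from `a` to `b` of length at most `M` avoiding the ball around `c` of radius
`(1/2)·d(c,{a,b}) − 2`. -/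
def DivLE {V : Type*} (G : SimpleGraph V) (n : ℕ) (M : ℝ) : Prop :=
  ∀ a b c : V, G.dist a b ≤ n → c ≠ a → c ≠ b →
    ∃ w : G.Walk a b, (w.length : ℝ) ≤ M ∧
      ∀ u ∈ w.support, ((min (G.dist c a) (G.dist c b) : ℝ)) / 2 - 2 < (G.dist c u : ℝ)

/-- A group (given as a graph) is one-ended. -/
def OneEnded {V : Type*} (G : SimpleGraph V) : Prop :=
  ∃! e, e ∈ G.end

/-- The Baumslag–Solitar relator `b⁻¹ aᵐ b a⁻ⁿ` in the free group on two generators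
(`a = FreeGroup.of 0`, `b = FreeGroup.of 1`). -/
def bsRelator (m n : ℤ) : FreeGroup (Fin 2) :=
  (FreeGroup.of 1)⁻¹ * (FreeGroup.of 0) ^ m * FreeGroup.of 1 * (FreeGroup.of 0) ^ (-n)

/-- The Baumslag–Solitar group `BS(m,n) = ⟨a, b ∣ b⁻¹ aᵐ b = aⁿ⟩`. -/
abbrev BaumslagSolitar (m n : ℤ) : Type :=
  PresentedGroup {bsRelator m n}


/-! ### The four-point inequality -/

/-- A vertex on a geodesic is a point of equality in the triangle inequality. -/
lemma SimpleGraph.Walk.IsGeodesic.dist_add_dist {V : Type*} {G : SimpleGraph V} {x y v : V}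
    {w : G.Walk x y} (hw : w.IsGeodesic) (hv : v ∈ w.support) :
    G.dist x v + G.dist v y ≤ G.dist x y := by
  classical
  have h := congrArg Walk.length (w.take_spec hv)
  rw [Walk.length_append, hw] at h
  rw [← h]
  exact add_le_add (dist_le _) (dist_le _)

/-- A geodesic detour through a point close to one of its vertices is almost as short. -/
lemma SimpleGraph.Walk.IsGeodesic.detour {V : Type*} {G : SimpleGraph V} (hG : G.Connected)
    {x y v u : V} {w : G.Walk x y} (hw : w.IsGeodesic) (hv : v ∈ w.support) {r : ℝ}
    (hu : (G.dist u v : ℝ) ≤ r) :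
    (G.dist x u : ℝ) + G.dist u y ≤ G.dist x y + 2 * r := by
  have h1 : (G.dist x v : ℝ) + G.dist v y ≤ G.dist x y := by exact_mod_cast hw.dist_add_dist hv
  have h2 : (G.dist x u : ℝ) ≤ G.dist x v + G.dist v u := by exact_mod_cast hG.dist_triangle
  have h3 : (G.dist u y : ℝ) ≤ G.dist u v + G.dist v y := by exact_mod_cast hG.dist_triangle
  rw [dist_comm (u := v) (v := u)] at h2
  linarith

/-- Each side of a thin triangle has a vertex that is close to both other sides, since its two
ends are close to different sides. The conclusion is phrased through detours. -/
lemma exists_center {W : Type*} {Y : SimpleGraph W} (hY : Y.Connected) {δ : ℝ} (hδ : 1 ≤ δ)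
    (hyp : GraphHyperbolic Y δ) {x y : W} (z : W) (γ : Y.Walk x y) (hγ : γ.IsGeodesic) :
    ∃ u ∈ γ.support,
      (Y.dist y u : ℝ) + Y.dist u z ≤ Y.dist y z + 2 * (δ + 1) ∧
      (Y.dist z u : ℝ) + Y.dist u x ≤ Y.dist z x + 2 * (δ + 1) := by
  obtain ⟨γ₂, h₂⟩ := hY.exists_walk_length_eq_dist y z
  obtain ⟨γ₃, h₃⟩ := hY.exists_walk_length_eq_dist z x
  have key := hyp γ γ₂ γ₃ hγ h₂ h₃
  by_cases hex : ∃ i, i ≤ γ.length ∧ ¬ ∃ v ∈ γ₃.support, (Y.dist (γ.getVert i) v : ℝ) ≤ δ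
  · classical
    set i := Nat.find hex with hi
    obtain ⟨hil, hin⟩ := Nat.find_spec hex
    have hi0 : i ≠ 0 := by
      intro h0
      apply hin
      refine ⟨x, γ₃.end_mem_support, ?_⟩
      rw [← hi, h0]
      simp
      linarith
    obtain ⟨k, hk⟩ := Nat.exists_eq_succ_of_ne_zero hi0
    have hk' : ∃ v ∈ γ₃.support, (Y.dist (γ.getVert k) v : ℝ) ≤ δ := by
      by_contra hc
      exact Nat.find_min hex (m := k) (by omega) ⟨by omega, hc⟩
    obtain ⟨v, hv, hvd⟩ := hk'
    obtain ⟨v', hv', hvd'⟩ := key (γ.getVert i) (γ.getVert_mem_support i)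
    have hv2 : v' ∈ γ₂.support := hv'.resolve_right fun h => hin ⟨v', h, hvd'⟩
    have hadj : Y.Adj (γ.getVert k) (γ.getVert i) := by
      rw [hk]; exact γ.adj_getVert_succ (by omega)
    have h1 : (Y.dist (γ.getVert k) (γ.getVert i) : ℝ) ≤ 1 := by
      exact_mod_cast (dist_eq_one_iff_adj.2 hadj).le
    have h2 : (Y.dist (γ.getVert k) v' : ℝ) ≤ Y.dist (γ.getVert k) (γ.getVert i) +
      Y.dist (γ.getVert i) v' := by exact_mod_cast hY.dist_triangle
    exact ⟨γ.getVert k, γ.getVert_mem_support k,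
      Walk.IsGeodesic.detour hY h₂ hv2 (by linarith),
      Walk.IsGeodesic.detour hY h₃ hv (by linarith)⟩
  · push Not at hex
    obtain ⟨v, hv, hvd⟩ := hex γ.length le_rfl
    rw [γ.getVert_length] at hvd
    refine ⟨y, γ.end_mem_support, ?_, Walk.IsGeodesic.detour hY h₃ hv (by linarith)⟩
    simp
    linarith

/-- Gromov's four-point inequality for a graph with thin triangles. -/
lemma four_point {W : Type*} {Y : SimpleGraph W} (hY : Y.Connected) {δ : ℝ} (hδ : 1 ≤ δ)
    (hyp : GraphHyperbolic Y δ) (x y z w : W) :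
    (Y.dist x y : ℝ) + Y.dist z w ≤
      max ((Y.dist x z : ℝ) + Y.dist y w) (Y.dist x w + Y.dist y z) + (4 * δ + 2) := by
  obtain ⟨γ, hγ⟩ := hY.exists_walk_length_eq_dist x y
  obtain ⟨γ₂, h₂⟩ := hY.exists_walk_length_eq_dist y w
  obtain ⟨γ₃, h₃⟩ := hY.exists_walk_length_eq_dist w x
  obtain ⟨u, hu, hc1, hc2⟩ := exists_center hY hδ hyp z γ hγ
  have t1 : (Y.dist x y : ℝ) ≤ Y.dist x u + Y.dist u y := by exact_mod_cast hY.dist_triangle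
  have t2 : (Y.dist z w : ℝ) ≤ Y.dist z u + Y.dist u w := by exact_mod_cast hY.dist_triangle
  obtain ⟨v, hv, hvd⟩ := hyp γ γ₂ γ₃ hγ h₂ h₃ u hu
  rcases hv with hv | hv
  · have := Walk.IsGeodesic.detour hY h₂ hv hvd
    have h := le_max_left ((Y.dist x z : ℝ) + Y.dist y w) (Y.dist x w + Y.dist y z)
    rw [dist_comm (u := u) (v := x), dist_comm (u := z) (v := x)] at hc2
    rw [dist_comm (u := u) (v := y)] at t1
    linarith
  · have := Walk.IsGeodesic.detour hY h₃ hv hvd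
    have h := le_max_right ((Y.dist x z : ℝ) + Y.dist y w) (Y.dist x w + Y.dist y z)
    rw [dist_comm (u := w) (v := u), dist_comm (u := u) (v := x), dist_comm (u := w) (v := x)]
      at this
    rw [dist_comm (u := u) (v := z)] at hc1
    rw [dist_comm (u := u) (v := y)] at t1
    linarith

/-! ### Hyperbolic spaces have no fat bigons -/

/-- A metric satisfying Gromov's four-point inequality with constant `D`; only the metric axioms
that are needed are listed, so that graph distances can be used directly. -/
structure FourPoint {W : Type*} (d : W → W → ℝ) (D : ℝ) : Prop where
  symm : ∀ x y, d x y = d y x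
  tri : ∀ x y z, d x z ≤ d x y + d y z
  self : ∀ x, d x x = 0
  four : ∀ x y z w, d x y + d z w ≤ max (d x z + d y w) (d x w + d y z) + D

/-- Coordinate of `u` along a geodesic from `y₀` to `y`: the Gromov product of `u` and `y`
at `y₀`. -/
noncomputable def coord {W : Type*} (d : W → W → ℝ) (y₀ y u : W) : ℝ :=
  (d y₀ u + d y₀ y - d u y) / 2

/-- Height of `u` above a geodesic from `y₀` to `y`: the Gromov product of `y₀` and `y` at `u`. -/
noncomputable def elev {W : Type*} (d : W → W → ℝ) (y₀ y u : W) : ℝ :=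
  (d y₀ u + d u y - d y₀ y) / 2

namespace FourPoint

variable {W : Type*} {d : W → W → ℝ} {D : ℝ}

lemma elev_nonneg (h : FourPoint d D) (y₀ y u : W) : 0 ≤ elev d y₀ y u := by
  have := h.tri y₀ u y
  unfold elev; linarith

lemma coord_sub_le (h : FourPoint d D) (y₀ y u v : W) :
    coord d y₀ y v - coord d y₀ y u ≤ d u v := by
  have h1 := h.tri y₀ u v
  have h2 := h.tri u v y
  unfold coord; linarith

lemma elev_sub_le (h : FourPoint d D) (y₀ y u v : W) :
    elev d y₀ y v - elev d y₀ y u ≤ d u v := by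
  have h1 := h.tri y₀ u v
  have h2 := h.tri v u y
  have h3 := h.symm u v
  unfold elev; linarith

/-- Contraction: far above the geodesic, the coordinate is almost constant at the scale of the
elevation. -/
lemma contract (h : FourPoint d D) {y₀ y u v : W} {r : ℝ} (hr : d u v ≤ r)
    (hu : r + D / 2 < elev d y₀ y u) :
    |coord d y₀ y v - coord d y₀ y u| ≤ D / 2 := by
  have f1 := h.four y₀ u y v
  have f2 := h.four y₀ v y u
  have t1 := h.tri u v y
  have t2 := h.tri y₀ v u
  have s1 := h.symm u v
  have s2 := h.symm u y
  have s3 := h.symm v y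
  unfold elev at hu
  unfold coord
  have c1 : d y₀ u + d y v ≤ d y₀ v + d u y + D := by
    rcases le_total (d y₀ y + d u v) (d y₀ v + d u y) with hc | hc
    · rw [max_eq_right hc] at f1; linarith
    · rw [max_eq_left hc] at f1; linarith
  have c2 : d y₀ v + d y u ≤ d y₀ u + d v y + D := by
    rcases le_total (d y₀ y + d v u) (d y₀ u + d v y) with hc | hc
    · rw [max_eq_right hc] at f2; linarith
    · rw [max_eq_left hc] at f2; linarith
  rw [abs_le]
  constructor <;> linarith

/-- Points of similar coordinate and small elevation are close. -/
lemma dist_le_coord (h : FourPoint d D) (y₀ y u v : W) :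
    d u v ≤ |coord d y₀ y u - coord d y₀ y v| + elev d y₀ y u + elev d y₀ y v + D := by
  have f := h.four y₀ y u v
  have s2 := h.symm u y
  have s3 := h.symm v y
  have a1 := le_abs_self (coord d y₀ y u - coord d y₀ y v)
  have a2 := neg_le_abs (coord d y₀ y u - coord d y₀ y v)
  have e1 : d y₀ u + d y v = d y₀ y + (coord d y₀ y u - coord d y₀ y v)
      + elev d y₀ y u + elev d y₀ y v := by
    unfold coord elev; rw [s3]; ring
  have e2 : d y₀ v + d y u = d y₀ y - (coord d y₀ y u - coord d y₀ y v)
      + elev d y₀ y u + elev d y₀ y v := by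
    unfold coord elev; rw [s2]; ring
  rcases max_choice (d y₀ u + d y v) (d y₀ v + d y u) with hc | hc <;> rw [hc] at f <;> linarith

lemma dist_seq_le (h : FourPoint d D) {K : ℝ} {p : ℕ → W}
    (hp : ∀ i, d (p i) (p (i + 1)) ≤ K) (i j : ℕ) : d (p i) (p (i + j)) ≤ j * K := by
  induction j with
  | zero => simp [h.self]
  | succ j ih =>
    have := h.tri (p i) (p (i + j)) (p (i + j + 1))
    have := hp (i + j)
    push_cast
    rw [← add_assoc]
    linarith

end FourPoint

/-- At most `b` natural numbers lie in a real interval of length less than `b`. -/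
lemma card_filter_near_le (T : Finset ℕ) (c r : ℝ) (b : ℕ) (hb : 2 * r + 1 ≤ b) :
    (T.filter fun t : ℕ => |(t : ℝ) - c| ≤ r).card ≤ b := by
  set U := T.filter fun t : ℕ => |(t : ℝ) - c| ≤ r with hU
  rcases U.eq_empty_or_nonempty with h0 | hne
  · simp [h0]
  · have hU' : ∀ t ∈ U, |(t : ℝ) - c| ≤ r := fun t ht => (Finset.mem_filter.1 ht).2
    have hmin := abs_le.1 (hU' _ (U.min'_mem hne))
    have hsub : U ⊆ Finset.Ico (U.min' hne) (U.min' hne + b) := by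
      intro t ht
      rw [Finset.mem_Ico]
      refine ⟨U.min'_le t ht, ?_⟩
      have : (t : ℝ) < (U.min' hne : ℝ) + b := by
        have := abs_le.1 (hU' t ht)
        linarith
      exact_mod_cast this
    simpa using Finset.card_le_card hsub

open Classical in
/-- Few coordinates along a geodesic are missed by the low part of a path. The path is cut into
blocks of length `R`. A block starting at elevation above `R * K + D / 2` has almost constant
coordinate by contraction, so it accounts for at most `b` integer coordinates; the other blocks
stay at elevation at most `2 * R * K + D / 2`. -/
lemma card_bad_le {W : Type*} {d : W → W → ℝ} {D : ℝ} (h : FourPoint d D)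
    {K : ℝ} (hK : 0 ≤ K) {R b : ℕ} (hR : 1 ≤ R) (hb : 2 * (K + D / 2) + 1 ≤ b)
    {y₀ y : W} {p : ℕ → W} {N : ℕ} (hp0 : p 0 = y₀) (hpN : p N = y)
    (hp : ∀ i, d (p i) (p (i + 1)) ≤ K) (T : Finset ℕ) (hT : ∀ t ∈ T, (t : ℝ) ≤ d y₀ y) :
    (T.filter fun t : ℕ => ¬ ∃ i ≤ N, |(t : ℝ) - coord d y₀ y (p i)| ≤ K ∧
      elev d y₀ y (p i) ≤ 2 * (R * K) + D / 2).card ≤ (N / R + 1) * b := by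
  have hsub : (T.filter fun t : ℕ => ¬ ∃ i ≤ N, |(t : ℝ) - coord d y₀ y (p i)| ≤ K ∧
      elev d y₀ y (p i) ≤ 2 * (R * K) + D / 2) ⊆
      (Finset.range (N / R + 1)).biUnion fun k =>
        T.filter fun t : ℕ => |(t : ℝ) - coord d y₀ y (p (k * R))| ≤ K + D / 2 := by
    intro t ht
    rw [Finset.mem_filter] at ht
    obtain ⟨htT, hbad⟩ := ht
    have htl := hT t htT
    have hc0 : coord d y₀ y (p 0) = 0 := by
      rw [hp0]; unfold coord; rw [h.self]; ring
    have hcN : coord d y₀ y (p N) = d y₀ y := by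
      rw [hpN]; unfold coord; rw [h.self]; ring
    -- discrete intermediate value theorem for the coordinate along the path
    have hivt : ∃ i ≤ N, |(t : ℝ) - coord d y₀ y (p i)| ≤ K := by
      have hex : ∃ i, (t : ℝ) ≤ coord d y₀ y (p i) := ⟨N, by rw [hcN]; exact htl⟩
      have hle : Nat.find hex ≤ N := Nat.find_min' hex (by rw [hcN]; exact htl)
      refine ⟨Nat.find hex, hle, ?_⟩
      have hspec := Nat.find_spec hex
      rcases Nat.eq_zero_or_pos (Nat.find hex) with h0 | hpos
      · rw [h0, hc0] at hspec
        have : (t : ℝ) = 0 := le_antisymm hspec (Nat.cast_nonneg t)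
        rw [h0, hc0, this]; simpa using hK
      · obtain ⟨k, hk⟩ := Nat.exists_eq_succ_of_ne_zero hpos.ne'
        have hlt : coord d y₀ y (p k) < t := by
          have := Nat.find_min hex (m := k) (by omega)
          exact not_le.1 this
        have := h.coord_sub_le y₀ y (p k) (p (k + 1))
        have := hp k
        rw [hk] at hspec ⊢
        rw [abs_le]
        simp only [Nat.succ_eq_add_one] at hspec ⊢
        constructor <;> linarith
    obtain ⟨i, hiN, hi⟩ := hivt
    have hei : 2 * (R * K) + D / 2 < elev d y₀ y (p i) := by
      by_contra hc
      exact hbad ⟨i, hiN, hi, not_lt.1 hc⟩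
    have hdecomp : i / R * R + i % R = i := by rw [mul_comm]; exact Nat.div_add_mod i R
    have hd : d (p (i / R * R)) (p i) ≤ R * K := by
      have h1 := h.dist_seq_le hp (i / R * R) (i % R)
      rw [hdecomp] at h1
      have h2 : ((i % R : ℕ) : ℝ) ≤ R := by exact_mod_cast (Nat.mod_lt i hR).le
      exact h1.trans (mul_le_mul_of_nonneg_right h2 hK)
    have hes := h.elev_sub_le y₀ y (p (i / R * R)) (p i)
    have hcon := h.contract hd (y₀ := y₀) (y := y) (by linarith)
    rw [Finset.mem_biUnion]
    refine ⟨i / R, ?_, ?_⟩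
    · rw [Finset.mem_range]
      exact Nat.lt_succ_of_le (Nat.div_le_div_right hiN)
    · rw [Finset.mem_filter]
      refine ⟨htT, ?_⟩
      have := abs_add_le ((t : ℝ) - coord d y₀ y (p i))
        (coord d y₀ y (p i) - coord d y₀ y (p (i / R * R)))
      rw [sub_add_sub_cancel] at this
      linarith
  refine (Finset.card_le_card hsub).trans ?_
  have := Finset.card_biUnion_le_card_mul (Finset.range (N / R + 1))
    (fun k => T.filter fun t : ℕ => |(t : ℝ) - coord d y₀ y (p (k * R))| ≤ K + D / 2) b
    (fun k _ => card_filter_near_le T _ _ b hb)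
  simpa using this

/-- Two Lipschitz paths of linear length with the same endpoints come close to each other
away from the endpoints, at a scale that depends only on the hyperbolicity constant and
the two rates: each path misses fewer than half of the coordinates at low elevation. -/
lemma no_fat_bigon {W : Type*} {d : W → W → ℝ} {D : ℝ} (h : FourPoint d D)
    {K Λ : ℝ} (hK : 0 ≤ K) (hΛ : 0 ≤ Λ) :
    ∃ s : ℝ, ∀ A : ℝ, ∃ ℓ₀ : ℝ, ∀ (y₀ y : W) (p q : ℕ → W) (N M : ℕ),
      ℓ₀ ≤ d y₀ y → (N : ℝ) ≤ Λ * d y₀ y → (M : ℝ) ≤ Λ * d y₀ y →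
      p 0 = y₀ → p N = y → q 0 = y₀ → q M = y →
      (∀ i, d (p i) (p (i + 1)) ≤ K) → (∀ i, d (q i) (q (i + 1)) ≤ K) →
      ∃ i ≤ N, ∃ j ≤ M, d (p i) (q j) ≤ s ∧ A < d y₀ (p i) ∧ A < d y (p i) ∧
        A < d y₀ (q j) ∧ A < d y (q j) := by
  classical
  obtain ⟨b, hb⟩ := exists_nat_ge (2 * (K + D / 2) + 1)
  obtain ⟨R, hR⟩ := exists_nat_ge (4 * Λ * b + 1)
  have hb0 : (0 : ℝ) ≤ b := Nat.cast_nonneg b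
  have hR1 : (1 : ℝ) ≤ R := by
    have : 0 ≤ 4 * Λ * b := by positivity
    linarith
  refine ⟨2 * K + 4 * (R * K) + 2 * D, fun A => ?_⟩
  obtain ⟨a, ha⟩ := exists_nat_ge (A + K + 1)
  refine ⟨4 * a + 4 * b + 4, ?_⟩
  intro y₀ y p q N M hℓ hN hM hp0 hpN hq0 hqM hp hq
  set ℓ := d y₀ y with hℓd
  have ha0 : (0 : ℝ) ≤ a := Nat.cast_nonneg a
  have hℓ0 : 0 ≤ ℓ := by linarith
  set T := Finset.Ico a (⌊ℓ⌋₊ - a) with hTdef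
  have hT : ∀ t ∈ T, (a : ℝ) ≤ t ∧ (t : ℝ) + a ≤ ℓ := by
    intro t ht
    rw [hTdef, Finset.mem_Ico] at ht
    refine ⟨by exact_mod_cast ht.1, ?_⟩
    have h1 : t + a ≤ ⌊ℓ⌋₊ := by omega
    exact le_trans (by exact_mod_cast h1) (Nat.floor_le hℓ0)
  have hT' : ∀ t ∈ T, (t : ℝ) ≤ d y₀ y := fun t ht => by
    have := (hT t ht).2
    linarith
  have cp := card_bad_le h hK (by exact_mod_cast hR1) hb hp0 hpN hp T hT'
  have cq := card_bad_le h hK (by exact_mod_cast hR1) hb hq0 hqM hq T hT'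
  have hdiv : ∀ n : ℕ, (n : ℝ) ≤ Λ * ℓ → (((n / R + 1) * b : ℕ) : ℝ) ≤ ℓ / 4 + b := by
    intro n hn
    have h1 : ((n / R : ℕ) : ℝ) ≤ (n : ℝ) / R := Nat.cast_div_le
    have h2 : (n : ℝ) / R * b ≤ ℓ / 4 := by
      rw [div_mul_eq_mul_div, div_le_iff₀ (by linarith)]
      have h3 : (n : ℝ) * b ≤ Λ * ℓ * b := mul_le_mul_of_nonneg_right hn hb0
      have h4 : ℓ * (4 * Λ * b) ≤ ℓ * R := mul_le_mul_of_nonneg_left (by linarith) hℓ0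
      linarith
    have h5 : ((n / R : ℕ) : ℝ) * b ≤ (n : ℝ) / R * b := mul_le_mul_of_nonneg_right h1 hb0
    push_cast
    linarith
  have hgood : ∃ t ∈ T,
      (∃ i ≤ N, |(t : ℝ) - coord d y₀ y (p i)| ≤ K ∧
        elev d y₀ y (p i) ≤ 2 * (R * K) + D / 2) ∧
      (∃ i ≤ M, |(t : ℝ) - coord d y₀ y (q i)| ≤ K ∧
        elev d y₀ y (q i) ≤ 2 * (R * K) + D / 2) := by
    by_contra hcon
    have hsub : T ⊆ (T.filter fun t : ℕ => ¬ ∃ i ≤ N, |(t : ℝ) - coord d y₀ y (p i)| ≤ K ∧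
        elev d y₀ y (p i) ≤ 2 * (R * K) + D / 2) ∪
        (T.filter fun t : ℕ => ¬ ∃ i ≤ M, |(t : ℝ) - coord d y₀ y (q i)| ≤ K ∧
        elev d y₀ y (q i) ≤ 2 * (R * K) + D / 2) := by
      intro t ht
      rw [Finset.mem_union, Finset.mem_filter, Finset.mem_filter]
      by_contra hc
      apply hcon
      refine ⟨t, ht, ?_, ?_⟩
      · by_contra h1; exact hc (Or.inl ⟨ht, h1⟩)
      · by_contra h1; exact hc (Or.inr ⟨ht, h1⟩)
    have hcard := (Finset.card_le_card hsub).trans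
      ((Finset.card_union_le _ _).trans (add_le_add cp cq))
    have hcard' : (T.card : ℝ) ≤ (((N / R + 1) * b : ℕ) : ℝ) + (((M / R + 1) * b : ℕ) : ℝ) := by
      exact_mod_cast hcard
    have hTc : ℓ - 1 - 2 * a ≤ T.card := by
      rw [hTdef, Nat.card_Ico]
      have h1 := Nat.lt_floor_add_one ℓ
      have h2 : ⌊ℓ⌋₊ ≤ (⌊ℓ⌋₊ - a - a) + 2 * a := by omega
      have h3 : (⌊ℓ⌋₊ : ℝ) ≤ ((⌊ℓ⌋₊ - a - a : ℕ) : ℝ) + 2 * a := by exact_mod_cast h2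
      linarith
    have := hdiv N hN
    have := hdiv M hM
    linarith
  obtain ⟨t, ht, ⟨i, hi, hic, hie⟩, ⟨j, hj, hjc, hje⟩⟩ := hgood
  obtain ⟨hta, htℓ⟩ := hT t ht
  refine ⟨i, hi, j, hj, ?_, ?_⟩
  · have h1 := h.dist_le_coord y₀ y (p i) (q j)
    have h2 := abs_sub_le (coord d y₀ y (p i)) (t : ℝ) (coord d y₀ y (q j))
    rw [abs_sub_comm (coord d y₀ y (p i)) (t : ℝ)] at h2
    linarith
  · have far : ∀ u : W, |(t : ℝ) - coord d y₀ y u| ≤ K → A < d y₀ u ∧ A < d y u := by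
      intro u hu
      have he := h.elev_nonneg y₀ y u
      have e1 : d y₀ u = coord d y₀ y u + elev d y₀ y u := by unfold coord elev; ring
      have e2 : d y u = ℓ - coord d y₀ y u + elev d y₀ y u := by
        rw [h.symm y u]; unfold coord elev; ring
      rw [abs_le] at hu
      constructor <;> linarith
    obtain ⟨f1, f2⟩ := far _ hic
    obtain ⟨f3, f4⟩ := far _ hjc
    exact ⟨f1, f2, f3, f4⟩

/-! ### Words in the Baumslag–Solitar group -/

/-- A letter `(ε, e)` stands for `b ^ ε * a ^ e` with exponents `ε = ±1` and `e ∈ {0, 1}`. -/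
abbrev BSLetter : Type := ℤˣ × Bool

/-- The exponent of `a` recorded by a Boolean. -/
def bsDigit (e : Bool) : ℤ := if e then 1 else 0

/-- A word is reduced when it contains no visible pinch: the sign may change only after a letter
with exponent `1`, and from `-` to `+` only if `2 ≤ |m|`. (For `2 ≤ |n|`, this makes it a reduced
word of the HNN extension.) -/
def BSReduced (m : ℤ) (L : List BSLetter) : Prop :=
  L.IsChain fun x y => x.1 = y.1 ∨ (x.2 = true ∧ (x.1 = 1 ∨ 2 ≤ |m|))

/-- The generator `a`. -/
def bsA (m n : ℤ) : BaumslagSolitar m n := PresentedGroup.of 0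

/-- The stable letter `b`. -/
def bsB (m n : ℤ) : BaumslagSolitar m n := PresentedGroup.of 1

/-- The group element represented by a letter. -/
def bsLetterVal (m n : ℤ) (x : BSLetter) : BaumslagSolitar m n :=
  bsB m n ^ (x.1 : ℤ) * bsA m n ^ bsDigit x.2

/-- The group element represented by a word. -/
def bsVal (m n : ℤ) (L : List BSLetter) : BaumslagSolitar m n :=
  (L.map (bsLetterVal m n)).prod

section Words

variable {m n : ℤ}

@[simp] lemma bsVal_nil : bsVal m n [] = 1 := rfl

@[simp] lemma bsVal_cons (x : BSLetter) (L : List BSLetter) :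
    bsVal m n (x :: L) = bsLetterVal m n x * bsVal m n L := by
  simp [bsVal]

@[simp] lemma bsVal_append (L L' : List BSLetter) :
    bsVal m n (L ++ L') = bsVal m n L * bsVal m n L' := by
  simp [bsVal]

lemma bs_rel : bsB m n * bsA m n ^ n = bsA m n ^ m * bsB m n := by
  have h : (PresentedGroup.mk {bsRelator m n} (bsRelator m n)) = 1 :=
    PresentedGroup.one_of_mem rfl
  have e : (PresentedGroup.mk {bsRelator m n} ((FreeGroup.of 1)⁻¹ * (FreeGroup.of 0) ^ m *
      FreeGroup.of 1 * (FreeGroup.of 0) ^ (-n))) =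
      (bsB m n)⁻¹ * bsA m n ^ m * bsB m n * bsA m n ^ (-n) := by
    rw [map_mul, map_mul, map_mul, map_inv, map_zpow, map_zpow]
    rfl
  have h2 : (bsB m n)⁻¹ * bsA m n ^ m * bsB m n * bsA m n ^ (-n) = 1 := e.symm.trans h
  rw [zpow_neg, mul_inv_eq_one] at h2
  rw [← h2]
  group

lemma bs_semiconj (r : ℤ) : SemiconjBy (bsB m n) (bsA m n ^ (n * r)) (bsA m n ^ (m * r)) := by
  have h : SemiconjBy (bsB m n) (bsA m n ^ n) (bsA m n ^ m) := bs_rel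
  rw [zpow_mul, zpow_mul]
  exact h.zpow_right r

lemma conj_pos (r : ℤ) (e : Bool) :
    bsA m n ^ (m * r) * bsLetterVal m n (1, e) = bsLetterVal m n (1, e) * bsA m n ^ (n * r) := by
  have h := (bs_semiconj (m := m) (n := n) r).eq
  simp only [bsLetterVal, Units.val_one, zpow_one]
  rw [← mul_assoc, ← h, mul_assoc, mul_assoc, ← zpow_add, ← zpow_add, add_comm]

lemma conj_neg (r : ℤ) (e : Bool) :
    bsA m n ^ (n * r) * bsLetterVal m n (-1, e) =
      bsLetterVal m n (-1, e) * bsA m n ^ (m * r) := by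
  have h := (bs_semiconj (m := m) (n := n) r).inv_symm_left.eq
  simp only [bsLetterVal, Units.val_neg, Units.val_one, zpow_neg, zpow_one]
  rw [← mul_assoc, ← h, mul_assoc, mul_assoc, ← zpow_add, ← zpow_add, add_comm]

end Words

/-! ### Reduced words and Britton's lemma -/

section HNN

open Multiplicative

variable (m n : ℤ)

lemma zpowGroupHom_injective {k : ℤ} (hk : k ≠ 0) :
    Function.Injective (zpowGroupHom k : Multiplicative ℤ →* Multiplicative ℤ) := by
  intro x y hxy
  have h : k * toAdd x = k * toAdd y := by
    simpa [zpowGroupHom, toAdd_zpow] using congrArg toAdd hxy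
  exact toAdd.injective (mul_left_cancel₀ hk h)

/-- The isomorphism `⟨aⁿ⟩ ≃ ⟨aᵐ⟩` defining `BS(m,n)` as an HNN extension of `ℤ`. -/
noncomputable def bsIso (hm : m ≠ 0) (hn : n ≠ 0) :
    (zpowGroupHom n : Multiplicative ℤ →* Multiplicative ℤ).range ≃*
      (zpowGroupHom m : Multiplicative ℤ →* Multiplicative ℤ).range :=
  (MonoidHom.ofInjective (zpowGroupHom_injective hn)).symm.trans
    (MonoidHom.ofInjective (zpowGroupHom_injective hm))

/-- The HNN extension of `ℤ` with stable letter conjugating `⟨aⁿ⟩` to `⟨aᵐ⟩`. -/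
abbrev BSHNN (hm : m ≠ 0) (hn : n ≠ 0) : Type :=
  HNNExtension (Multiplicative ℤ) _ _ (bsIso m n hm hn)

variable {m n}

lemma bsHNN_rel (hm : m ≠ 0) (hn : n ≠ 0) :
    (HNNExtension.t : BSHNN m n hm hn) * HNNExtension.of (ofAdd 1) ^ n =
      HNNExtension.of (ofAdd 1) ^ m * HNNExtension.t := by
  have h := HNNExtension.t_mul_of (φ := bsIso m n hm hn)
    (MonoidHom.ofInjective (zpowGroupHom_injective hn) (ofAdd 1))
  rw [bsIso, MulEquiv.trans_apply, MulEquiv.symm_apply_apply] at h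
  have e : ∀ k : ℤ, (HNNExtension.of (ofAdd (1 : ℤ)) : BSHNN m n hm hn) ^ k =
      HNNExtension.of ((ofAdd (1 : ℤ)) ^ k) := fun k =>
    (map_zpow (HNNExtension.of : Multiplicative ℤ →* BSHNN m n hm hn) _ k).symm
  rw [e, e]
  exact h

/-- The homomorphism from the presented group `BS(m,n)` to the HNN extension sending `a` to the
generator of `ℤ` and `b` to the stable letter. -/
noncomputable def toHNN (hm : m ≠ 0) (hn : n ≠ 0) : BaumslagSolitar m n →* BSHNN m n hm hn :=
  PresentedGroup.toGroup (f := ![HNNExtension.of (ofAdd 1), HNNExtension.t]) <| by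
    intro r hr
    rw [Set.mem_singleton_iff] at hr
    subst hr
    simp only [bsRelator, map_mul, map_inv, map_zpow, FreeGroup.lift_apply_of]
    simp only [Matrix.cons_val_zero, Matrix.cons_val_one]
    rw [zpow_neg, mul_inv_eq_one, mul_assoc, inv_mul_eq_iff_eq_mul]
    exact (bsHNN_rel hm hn).symm

lemma toHNN_A (hm : m ≠ 0) (hn : n ≠ 0) : toHNN hm hn (bsA m n) = HNNExtension.of (ofAdd 1) :=
  PresentedGroup.toGroup.of _

lemma toHNN_B (hm : m ≠ 0) (hn : n ≠ 0) : toHNN hm hn (bsB m n) = HNNExtension.t :=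
  PresentedGroup.toGroup.of _

lemma toHNN_A_zpow (hm : m ≠ 0) (hn : n ≠ 0) (k : ℤ) :
    toHNN hm hn (bsA m n ^ k) = HNNExtension.of (ofAdd k) := by
  have h1 : (ofAdd (1 : ℤ)) ^ k = ofAdd k := by
    rw [← ofAdd_zsmul]; simp
  have h2 : toHNN hm hn (bsA m n ^ k) = toHNN hm hn (bsA m n) ^ k := map_zpow _ _ _
  have h3 : (HNNExtension.of ((ofAdd (1 : ℤ)) ^ k) : BSHNN m n hm hn) =
      HNNExtension.of (ofAdd 1) ^ k :=
    map_zpow (HNNExtension.of : Multiplicative ℤ →* BSHNN m n hm hn) _ _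
  rw [h2, toHNN_A, ← h1, h3]

lemma bsA_zpow_injective (hm : m ≠ 0) (hn : n ≠ 0) :
    Function.Injective fun k : ℤ => bsA m n ^ k := by
  intro i j hij
  have := congrArg (toHNN hm hn) hij
  simp only [toHNN_A_zpow] at this
  exact ofAdd.injective (HNNExtension.of_injective _ this)

/-- A reduced word, multiplied by powers of `a` on both sides, is represented by a reduced word
of the HNN extension with the same pattern of signs: the right factor is absorbed by the last
letter, whose exponent is not constrained. -/
lemma exists_reducedWord (hm : m ≠ 0) (hn : n ≠ 0) (hn2 : 2 ≤ |n|)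
    {L : List BSLetter} (hL : BSReduced m L) (i j : ℤ) :
    ∃ w : HNNExtension.NormalWord.ReducedWord (Multiplicative ℤ)
        (zpowGroupHom n : Multiplicative ℤ →* Multiplicative ℤ).range
        (zpowGroupHom m : Multiplicative ℤ →* Multiplicative ℤ).range,
      w.prod (bsIso m n hm hn) = toHNN hm hn (bsA m n ^ i * bsVal m n L * bsA m n ^ j) ∧
      w.toList.map Prod.fst = L.map Prod.fst ∧ (L ≠ [] → w.head = ofAdd i) := by
  have not_mem : ∀ k : ℤ, 2 ≤ |k| →
      ofAdd (1 : ℤ) ∉ (zpowGroupHom k : Multiplicative ℤ →* Multiplicative ℤ).range := by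
    rintro k hk ⟨x, hx⟩
    have h1 : k * toAdd x = 1 := by
      simpa [zpowGroupHom, toAdd_zpow] using congrArg toAdd hx
    have h2 := Int.isUnit_iff_abs_eq.1 (IsUnit.of_mul_eq_one _ h1)
    omega
  induction L generalizing i with
  | nil =>
    refine ⟨⟨ofAdd i * ofAdd j, [], List.isChain_nil⟩, ?_, rfl, fun h => absurd rfl h⟩
    simp only [bsVal_nil, mul_one, map_mul, toHNN_A_zpow, HNNExtension.NormalWord.ReducedWord.prod,
      List.map_nil, List.prod_nil]
  | cons x L ih =>
    obtain ⟨w, hw1, hw2, hw3⟩ := ih (List.isChain_cons.1 hL).2 0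
    have hchain : ((x.1, ofAdd (bsDigit x.2) * w.head) :: w.toList).IsChain fun a b =>
        a.2 ∈ HNNExtension.toSubgroup
          (zpowGroupHom n : Multiplicative ℤ →* Multiplicative ℤ).range
          (zpowGroupHom m : Multiplicative ℤ →* Multiplicative ℤ).range a.1 → a.1 = b.1 := by
      rw [List.isChain_cons]
      refine ⟨?_, w.chain⟩
      intro y hy hmem
      cases L with
      | nil =>
        have h0 : w.toList = [] := by simpa using hw2
        rw [h0] at hy
        simp at hy
      | cons z L =>
        have hyz : y.1 = z.1 := by
          cases hwl : w.toList with
          | nil => rw [hwl] at hy; simp at hy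
          | cons y' l =>
            rw [hwl] at hy hw2
            simp only [List.head?_cons, Option.mem_def, Option.some.injEq] at hy
            simp only [List.map_cons, List.cons.injEq] at hw2
            rw [← hy]; exact hw2.1
        have hh : w.head = 1 := hw3 (by simp)
        rw [hh, mul_one] at hmem
        change x.1 = y.1
        rw [hyz]
        rcases (List.isChain_cons_cons.1 hL).1 with h | ⟨hx2, hx⟩
        · exact h
        · exfalso
          change ofAdd (bsDigit x.2) ∈ HNNExtension.toSubgroup _ _ x.1 at hmem
          rw [hx2] at hmem
          rcases Int.units_eq_one_or x.1 with h1 | h1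
          · rw [h1] at hmem
            exact not_mem n hn2 hmem
          · rw [h1] at hmem
            refine not_mem m (hx.resolve_left ?_) hmem
            rw [h1]; decide
    refine ⟨⟨ofAdd i, (x.1, ofAdd (bsDigit x.2) * w.head) :: w.toList, hchain⟩, ?_, ?_,
      fun _ => rfl⟩
    · have h : w.prod (bsIso m n hm hn) = toHNN hm hn (bsVal m n L * bsA m n ^ j) := by
        simpa using hw1
      have e : bsA m n ^ i * bsVal m n (x :: L) * bsA m n ^ j =
          bsA m n ^ i * (bsB m n ^ (x.1 : ℤ) * bsA m n ^ bsDigit x.2) *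
            (bsVal m n L * bsA m n ^ j) := by
        simp only [bsVal_cons, bsLetterVal, mul_assoc]
      rw [e, map_mul, ← h, map_mul, map_mul, toHNN_A_zpow, toHNN_A_zpow, map_zpow, toHNN_B]
      simp only [HNNExtension.NormalWord.ReducedWord.prod, List.map_cons, List.prod_cons, map_mul,
        mul_assoc]
    · simp only [List.map_cons, hw2]

/-- The pattern of signs of a reduced word is determined by its double coset of `⟨a⟩`
(Britton's lemma). -/
lemma signs_eq (hm : m ≠ 0) (hn : n ≠ 0) (hn2 : 2 ≤ |n|)
    {L L' : List BSLetter} (hL : BSReduced m L) (hL' : BSReduced m L')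
    {i j i' j' : ℤ} (h : bsA m n ^ i * bsVal m n L * bsA m n ^ j =
      bsA m n ^ i' * bsVal m n L' * bsA m n ^ j') :
    L.map Prod.fst = L'.map Prod.fst := by
  obtain ⟨w, hw1, hw2, -⟩ := exists_reducedWord hm hn hn2 hL i j
  obtain ⟨w', hw1', hw2', -⟩ := exists_reducedWord hm hn hn2 hL' i' j'
  rw [← hw2, ← hw2']
  exact (HNNExtension.ReducedWord.map_fst_eq_and_of_prod_eq _ (by rw [hw1, hw1', h])).1

/-- Reduced words in finitely many double cosets of `⟨a⟩` have bounded length. -/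
lemma exists_length_bound (hm : m ≠ 0) (hn : n ≠ 0) (hn2 : 2 ≤ |n|)
    {F : Set (BaumslagSolitar m n)} (hF : F.Finite) :
    ∃ s : ℕ, ∀ L : List BSLetter, BSReduced m L → ∀ i j : ℤ,
      (bsA m n ^ i * bsVal m n L * bsA m n ^ j ∈ F ∨
        (bsA m n ^ i * bsVal m n L * bsA m n ^ j)⁻¹ ∈ F) → L.length ≤ s := by
  have key : ∀ g : BaumslagSolitar m n, ∃ s : ℕ, ∀ L : List BSLetter, BSReduced m L → ∀ i j : ℤ,
      bsA m n ^ i * bsVal m n L * bsA m n ^ j = g → L.length ≤ s := by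
    intro g
    by_cases hg : ∃ L : List BSLetter, BSReduced m L ∧ ∃ i j : ℤ,
      bsA m n ^ i * bsVal m n L * bsA m n ^ j = g
    · obtain ⟨L₀, h₀, i₀, j₀, e₀⟩ := hg
      refine ⟨L₀.length, fun L hL i j e => ?_⟩
      have := congrArg List.length (signs_eq hm hn hn2 hL h₀ (e.trans e₀.symm))
      simp only [List.length_map] at this
      exact this.le
    · exact ⟨0, fun L hL i j e => absurd ⟨L, hL, i, j, e⟩ hg⟩
  choose s hs using key
  obtain ⟨M, hM⟩ := ((hF.union hF.inv).image s).bddAbove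
  refine ⟨M, fun L hL i j h => (hs _ L hL i j rfl).trans (hM ⟨_, ?_, rfl⟩)⟩
  rcases h with h | h
  · exact Or.inl h
  · exact Or.inr h

end HNN

/-! ### Bigons with an algebraically controlled boundary -/

section Bigons

variable {m n : ℤ}

/-- The elements represented by words of length at most `s`. -/
def bsWords (m n : ℤ) (s : ℕ) : Set (BaumslagSolitar m n) :=
  bsVal m n '' {L | L.length ≤ s}

lemma bsWords_finite (m n : ℤ) (s : ℕ) : (bsWords m n s).Finite :=
  (List.finite_length_le BSLetter s).image _

lemma bsVal_mem_bsWords {L : List BSLetter} {s : ℕ} (h : L.length ≤ s) :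
    bsVal m n L ∈ bsWords m n s :=
  ⟨L, h, rfl⟩

/-- A finite set contains only finitely many powers of `a`. -/
lemma exists_exponent_bound (hm : m ≠ 0) (hn : n ≠ 0) {F : Set (BaumslagSolitar m n)}
    (hF : F.Finite) : ∃ Q : ℕ, ∀ q : ℤ, bsA m n ^ q ∈ F → |q| ≤ Q := by
  have h : ((fun k : ℤ => bsA m n ^ k) ⁻¹' F).Finite :=
    hF.preimage (bsA_zpow_injective hm hn).injOn
  obtain ⟨M, hM⟩ := (h.image fun q : ℤ => q.natAbs).bddAbove
  refine ⟨M, fun q hq => ?_⟩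
  rw [Int.abs_eq_natAbs]
  exact_mod_cast hM ⟨q, hq, rfl⟩

/-- The word `L` moves `a ^ p` past itself, and past each of its prefixes; moreover the power of
`a` which appears after a prefix is large (in the sense measured by `C`) unless the prefix or the
remaining suffix is short. -/
structure BSTransparent (m n : ℤ) (C : ℕ → ℕ) (p : ℕ) (L : List BSLetter) : Prop where
  reduced : BSReduced m L
  comm : bsA m n ^ (p : ℤ) * bsVal m n L = bsVal m n L * bsA m n ^ (p : ℤ)
  split_comm : ∀ L₁ L₂, L = L₁ ++ L₂ → ∃ q : ℤ,
    bsA m n ^ (p : ℤ) * bsVal m n L₁ = bsVal m n L₁ * bsA m n ^ q ∧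
      ∀ Q : ℕ, |q| ≤ Q → L₁.length ≤ C Q ∨ L₂.length ≤ C Q

/-- The two sides `a ^ p * L` and `L * a ^ p` of the rectangle given by a transparent word come
close to each other only near its two corners `1` and `X = L * a ^ p`. -/
lemma BSTransparent.sides_apart (hm : m ≠ 0) (hn : n ≠ 0) (hn2 : 2 ≤ |n|) (Lc : ℕ) (C : ℕ → ℕ)
    {F : Set (BaumslagSolitar m n)} (hF : F.Finite) :
    ∃ F' : Set (BaumslagSolitar m n), F'.Finite ∧ ∀ p L, BSTransparent m n C p L →
      p ≤ Lc * (L.length + 1) → ∀ X, X = bsVal m n L * bsA m n ^ (p : ℤ) → ∀ u v,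
      ((∃ k : ℕ, k ≤ p ∧ u = bsA m n ^ (k : ℤ)) ∨
        ∃ L₁ L₂, L = L₁ ++ L₂ ∧ u = bsA m n ^ (p : ℤ) * bsVal m n L₁) →
      ((∃ L₁ L₂, L = L₁ ++ L₂ ∧ v = bsVal m n L₁) ∨
        ∃ k : ℕ, k ≤ p ∧ v = bsVal m n L * bsA m n ^ (k : ℤ)) →
      u⁻¹ * v ∈ F → u ∈ F' ∨ X⁻¹ * u ∈ F' ∨ v ∈ F' ∨ X⁻¹ * v ∈ F' := by
  obtain ⟨s, hs⟩ := exists_length_bound hm hn hn2 hF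
  have hW := bsWords_finite m n s
  obtain ⟨Q, hQ⟩ := exists_exponent_bound hm hn
    ((hF.mul hW.inv).union (hW.inv.mul hF.inv))
  refine ⟨bsWords m n (C Q + s) ∪ (bsWords m n (C Q + s))⁻¹ ∪
    (fun k : ℤ => bsA m n ^ k) '' Set.Icc (-(Lc * (s + 1) : ℤ)) (Lc * (s + 1)),
    ((bsWords_finite m n _).union (bsWords_finite m n _).inv).union
      ((Set.finite_Icc _ _).image _), ?_⟩
  intro p L hL hp X hX u v hu hv huv
  have word : ∀ V : List BSLetter, V.length ≤ C Q + s → bsVal m n V ∈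
      bsWords m n (C Q + s) ∪ (bsWords m n (C Q + s))⁻¹ ∪
        (fun k : ℤ => bsA m n ^ k) '' Set.Icc (-(Lc * (s + 1) : ℤ)) (Lc * (s + 1)) :=
    fun V hV => Or.inl (Or.inl (bsVal_mem_bsWords hV))
  have wordInv : ∀ V : List BSLetter, V.length ≤ C Q + s → (bsVal m n V)⁻¹ ∈
      bsWords m n (C Q + s) ∪ (bsWords m n (C Q + s))⁻¹ ∪
        (fun k : ℤ => bsA m n ^ k) '' Set.Icc (-(Lc * (s + 1) : ℤ)) (Lc * (s + 1)) :=
    fun V hV => Or.inl (Or.inr (by simpa using bsVal_mem_bsWords hV))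
  have hX' : X = bsA m n ^ (p : ℤ) * bsVal m n L := hX.trans hL.comm.symm
  rcases hu with ⟨k, hk, rfl⟩ | ⟨L₁, L₂, rfl, rfl⟩
  · rcases hv with ⟨L₁, L₂, rfl, rfl⟩ | ⟨k', hk', rfl⟩
    · have h := hs L₁ hL.reduced.left_of_append (-k) 0 (Or.inl (by simpa using huv))
      exact Or.inr (Or.inr (Or.inl (word _ (by omega))))
    · have h := hs L hL.reduced (-k) k' (Or.inl (by simpa [mul_assoc] using huv))
      refine Or.inr (Or.inr (Or.inr (Or.inr ⟨k' - p, ?_, ?_⟩)))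
      · have h1 : p ≤ Lc * (s + 1) := hp.trans (Nat.mul_le_mul_left _ (by omega))
        zify at h1
        rw [Set.mem_Icc]
        omega
      · simp only [hX]
        group
  · obtain ⟨q, hq, hC⟩ := hL.split_comm L₁ L₂ rfl
    have hXu : X⁻¹ * (bsA m n ^ (p : ℤ) * bsVal m n L₁) = (bsVal m n L₂)⁻¹ := by
      rw [hX', bsVal_append]
      group
    rcases hv with ⟨L₁', L₂', hLL, rfl⟩ | ⟨k', hk', rfl⟩
    · rcases List.append_eq_append_iff.1 hLL with ⟨V, hV1, hV2⟩ | ⟨V, hV1, hV2⟩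
      · subst hV1
        have e : (bsA m n ^ (p : ℤ) * bsVal m n L₁)⁻¹ * bsVal m n (L₁ ++ V) =
            bsA m n ^ (-q) * bsVal m n V := by
          rw [hq, bsVal_append]
          group
        rw [e] at huv
        have hVr : BSReduced m V := by
          have h1 := hL.reduced
          rw [hV2] at h1
          exact h1.right_of_append.left_of_append
        have h := hs V hVr (-q) 0 (Or.inl (by simpa using huv))
        have hqQ := hQ (-q) (Or.inl ⟨_, huv, (bsVal m n V)⁻¹, by
          simpa using bsVal_mem_bsWords h, by group⟩)
        rw [abs_neg] at hqQ
        rcases hC Q hqQ with h1 | h1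
        · refine Or.inr (Or.inr (Or.inl (word _ ?_)))
          rw [List.length_append]
          omega
        · refine Or.inr (Or.inl ?_)
          rw [hXu]
          exact wordInv _ (by omega)
      · subst hV1
        have e : ((bsA m n ^ (p : ℤ) * bsVal m n (L₁' ++ V))⁻¹ * bsVal m n L₁')⁻¹ =
            bsVal m n V * bsA m n ^ q := by
          rw [hq, bsVal_append]
          group
        have huv' : (bsVal m n V * bsA m n ^ q)⁻¹ ∈ F := by
          rw [← e, inv_inv]
          exact huv
        have hVr : BSReduced m V := hL.reduced.left_of_append.right_of_append
        have h := hs V hVr 0 q (Or.inr (by simpa using huv'))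
        have hqQ := hQ q (Or.inr ⟨(bsVal m n V)⁻¹, by
          simpa using bsVal_mem_bsWords h, _, huv', by group⟩)
        rcases hC Q hqQ with h1 | h1
        · refine Or.inr (Or.inr (Or.inl (word _ ?_)))
          rw [List.length_append] at h1
          omega
        · refine Or.inr (Or.inl ?_)
          rw [hXu]
          exact wordInv _ (by omega)
    · have e : (bsA m n ^ (p : ℤ) * bsVal m n L₁)⁻¹ * (bsVal m n (L₁ ++ L₂) * bsA m n ^ (k' : ℤ)) =
          bsA m n ^ (-q) * bsVal m n L₂ * bsA m n ^ (k' : ℤ) := by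
        rw [hq, bsVal_append]
        group
      rw [e] at huv
      have h := hs L₂ hL.reduced.right_of_append _ _ (Or.inl huv)
      refine Or.inr (Or.inl ?_)
      rw [hXu]
      exact wordInv _ (by omega)

/-- The increments along the paths below. -/
def bsSteps (m n : ℤ) : Set (BaumslagSolitar m n) :=
  insert 1 (insert (bsA m n) (Set.range (bsLetterVal m n)))

lemma bsSteps_finite (m n : ℤ) : (bsSteps m n).Finite :=
  ((Set.finite_range _).insert _).insert _

lemma bsVal_take_step (L : List BSLetter) (i : ℕ) :
    (bsVal m n (L.take i))⁻¹ * bsVal m n (L.take (i + 1)) ∈ bsSteps m n := by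
  rcases lt_or_ge i L.length with h | h
  · rw [List.take_add_one, List.getElem?_eq_getElem h, bsVal_append]
    exact Or.inr (Or.inr ⟨L[i], by simp⟩)
  · rw [List.take_of_length_le h, List.take_of_length_le (by omega)]
    exact Or.inl (by simp)

lemma bsA_min_step (i p : ℕ) :
    (bsA m n ^ ((min i p : ℕ) : ℤ))⁻¹ * bsA m n ^ ((min (i + 1) p : ℕ) : ℤ) ∈ bsSteps m n := by
  rcases lt_or_ge i p with h | h
  · rw [min_eq_left h.le, min_eq_left h]
    refine Or.inr (Or.inl ?_)
    push_cast
    group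
  · rw [min_eq_right h, min_eq_right (by omega)]
    exact Or.inl (by simp)

/-- The boundary paths of the rectangle given by a transparent word. -/
lemma BSTransparent.exists_paths (hm : m ≠ 0) (hn : n ≠ 0) (hn2 : 2 ≤ |n|) (Lc : ℕ)
    (C : ℕ → ℕ) {F : Set (BaumslagSolitar m n)} (hF : F.Finite) :
    ∃ F' : Set (BaumslagSolitar m n), F'.Finite ∧ ∀ p L, BSTransparent m n C p L →
      p ≤ Lc * (L.length + 1) → ∀ X, X = bsVal m n L * bsA m n ^ (p : ℤ) →
      ∃ α β : ℕ → BaumslagSolitar m n, α 0 = 1 ∧ β 0 = 1 ∧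
        α (p + L.length) = X ∧ β (p + L.length) = X ∧
        (∀ i, (α i)⁻¹ * α (i + 1) ∈ bsSteps m n) ∧ (∀ i, (β i)⁻¹ * β (i + 1) ∈ bsSteps m n) ∧
        ∀ i j, (α i)⁻¹ * β j ∈ F →
          α i ∈ F' ∨ X⁻¹ * α i ∈ F' ∨ β j ∈ F' ∨ X⁻¹ * β j ∈ F' := by
  obtain ⟨F', hF', h⟩ := BSTransparent.sides_apart hm hn hn2 Lc C hF
  refine ⟨F', hF', fun p L hL hp X hX => ?_⟩
  refine ⟨fun i => bsA m n ^ ((min i p : ℕ) : ℤ) * bsVal m n (L.take (i - p)),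
    fun i => bsVal m n (L.take i) * bsA m n ^ ((min (i - L.length) p : ℕ) : ℤ),
    by simp, by simp, ?_, ?_, ?_, ?_, ?_⟩
  · simp only [min_eq_right (show p ≤ p + L.length by omega), Nat.add_sub_cancel_left,
      List.take_length, hL.comm, hX]
  · simp only [List.take_of_length_le (show L.length ≤ p + L.length by omega),
      Nat.add_sub_cancel, min_self, hX]
  · intro i
    rcases lt_or_ge i p with hi | hi
    · have h1 : i - p = 0 := by omega
      have h2 : i + 1 - p = 0 := by omega
      simpa [h1, h2] using bsA_min_step (m := m) (n := n) i p
    · have h1 : i + 1 - p = i - p + 1 := by omega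
      have h2 := bsVal_take_step (m := m) (n := n) L (i - p)
      simp only [h1, min_eq_right hi, min_eq_right (show p ≤ i + 1 by omega)]
      convert h2 using 1
      group
  · intro i
    rcases lt_or_ge i L.length with hi | hi
    · have h1 : i - L.length = 0 := by omega
      have h2 : i + 1 - L.length = 0 := by omega
      simpa [h1, h2] using bsVal_take_step (m := m) (n := n) L i
    · have h1 : i + 1 - L.length = i - L.length + 1 := by omega
      have h2 := bsA_min_step (m := m) (n := n) (i - L.length) p
      simp only [h1, List.take_of_length_le hi,
        List.take_of_length_le (show L.length ≤ i + 1 by omega)]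
      convert h2 using 1
      group
  · intro i j hij
    refine h p L hL hp X hX _ _ ?_ ?_ hij
    · rcases lt_or_ge i p with hi | hi
      · refine Or.inl ⟨i, hi.le, ?_⟩
        have h1 : i - p = 0 := by omega
        simp [h1, min_eq_left hi.le]
      · exact Or.inr ⟨L.take (i - p), L.drop (i - p), (List.take_append_drop _ _).symm, by
          simp only [min_eq_right hi]⟩
    · rcases lt_or_ge j L.length with hj | hj
      · refine Or.inl ⟨L.take j, L.drop j, (List.take_append_drop _ _).symm, ?_⟩
        have h1 : j - L.length = 0 := by omega
        simp [h1]
      · exact Or.inr ⟨min (j - L.length) p, min_le_right _ _, by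
          simp only [List.take_of_length_le hj]⟩

end Bigons

/-! ### Exponentially many transparent words -/

section Families

variable {m n : ℤ}

/-- The two blocks `b a b⁻¹ a` and `b⁻¹ a b a`, both commuting with powers of `a ^ (m * n)`. -/
def bsBlock (e : Bool) : List BSLetter :=
  if e then [(1, true), (-1, true)] else [(-1, true), (1, true)]

lemma bsBlock_flatMap_length (v : List Bool) : (v.flatMap bsBlock).length = 2 * v.length := by
  induction v with
  | nil => rfl
  | cons e v ih => cases e <;> simp [bsBlock, ih] <;> ring

lemma bsBlock_flatMap_reduced (hm : 2 ≤ |m|) (v : List Bool) :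
    BSReduced m (v.flatMap bsBlock) := by
  have h : ∀ x ∈ v.flatMap bsBlock, x.2 = true := by
    intro x hx
    obtain ⟨e, -, hx⟩ := List.mem_flatMap.1 hx
    cases e <;> simp [bsBlock] at hx <;> rcases hx with rfl | rfl <;> rfl
  exact List.Pairwise.isChain (List.pairwise_of_forall_mem_list fun x hx y _ =>
    Or.inr ⟨h x hx, Or.inr hm⟩)

lemma bsBlock_conj (r : ℤ) (e : Bool) :
    bsA m n ^ (m * n * r) * bsVal m n (bsBlock e) =
      bsVal m n (bsBlock e) * bsA m n ^ (m * n * r) := by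
  cases e
  · simp only [bsBlock, Bool.false_eq_true, if_false, bsVal_cons, bsVal_nil, mul_one]
    rw [show m * n * r = n * (m * r) by ring, ← mul_assoc, conj_neg, mul_assoc,
      conj_pos, mul_assoc]
  · simp only [bsBlock, if_true, bsVal_cons, bsVal_nil, mul_one]
    rw [show m * n * r = m * (n * r) by ring, ← mul_assoc, conj_pos, mul_assoc,
      conj_neg, mul_assoc]

lemma bsBlock_flatMap_conj (r : ℤ) (v : List Bool) :
    bsA m n ^ (m * n * r) * bsVal m n (v.flatMap bsBlock) =
      bsVal m n (v.flatMap bsBlock) * bsA m n ^ (m * n * r) := by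
  induction v with
  | nil => simp
  | cons e v ih =>
    rw [List.flatMap_cons, bsVal_append, ← mul_assoc, bsBlock_conj, mul_assoc, ih,
      mul_assoc (bsVal m n _)]

lemma bsBlock_flatMap_split (r : ℤ) (v : List Bool) :
    ∀ L₁ L₂, v.flatMap bsBlock = L₁ ++ L₂ →
      ∃ q : ℤ, (q = m * n * r ∨ q = n * n * r ∨ q = m * m * r) ∧
        bsA m n ^ (m * n * r) * bsVal m n L₁ = bsVal m n L₁ * bsA m n ^ q := by
  induction v with
  | nil =>
    intro L₁ L₂ h
    have h1 : L₁ = [] := by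
      have := congrArg List.length h
      simp only [List.flatMap_nil, List.length_nil, List.length_append] at this
      exact List.length_eq_zero_iff.1 (by omega)
    subst h1
    exact ⟨_, Or.inl rfl, by simp⟩
  | cons e v ih =>
    intro L₁ L₂ h
    have h' : bsBlock e ++ v.flatMap bsBlock = L₁ ++ L₂ := by simpa using h
    rcases List.append_eq_append_iff.1 h' with ⟨V, rfl, hV⟩ | ⟨V, hV, -⟩
    · obtain ⟨q, hq, hq'⟩ := ih V L₂ hV
      refine ⟨q, hq, ?_⟩
      rw [bsVal_append, ← mul_assoc, bsBlock_conj, mul_assoc, hq', mul_assoc]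
    · rcases L₁ with _ | ⟨x, _ | ⟨y, L₁⟩⟩
      · exact ⟨_, Or.inl rfl, by simp⟩
      · cases e
        · have hx : x = (-1, true) := by simp [bsBlock] at hV; exact hV.1.symm
          refine ⟨m * m * r, Or.inr (Or.inr rfl), ?_⟩
          rw [hx, bsVal_cons, bsVal_nil, mul_one, show m * n * r = n * (m * r) by ring,
            conj_neg, mul_assoc m m r]
        · have hx : x = (1, true) := by simp [bsBlock] at hV; exact hV.1.symm
          refine ⟨n * n * r, Or.inr (Or.inl rfl), ?_⟩
          rw [hx, bsVal_cons, bsVal_nil, mul_one, show m * n * r = m * (n * r) by ring,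
            conj_pos, mul_assoc n n r]
      · have hL : bsBlock e = x :: y :: L₁ := by
          have h1 := congrArg List.length hV
          have h2 : (bsBlock e).length = 2 := by cases e <;> rfl
          have h3 : V = [] := by
            simp only [h2, List.length_append, List.length_cons] at h1
            exact List.length_eq_zero_iff.1 (by omega)
          rw [hV, h3, List.append_nil]
        rw [← hL]
        exact ⟨_, Or.inl rfl, bsBlock_conj r e⟩

lemma bsBlock_flatMap_injective :
    ∀ v v' : List Bool, (v.flatMap bsBlock).map Prod.fst = (v'.flatMap bsBlock).map Prod.fst →
      v = v' := by
  intro v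
  induction v with
  | nil =>
    intro v' h
    have := congrArg List.length h
    simp only [List.length_map, bsBlock_flatMap_length] at this
    exact (List.length_eq_zero_iff.1 (by simpa using this.symm)).symm
  | cons e v ih =>
    intro v' h
    cases v' with
    | nil =>
      have := congrArg List.length h
      simp at this
      cases e <;> simp [bsBlock] at this
    | cons e' v' =>
      cases e <;> cases e' <;>
        simp only [List.flatMap_cons, bsBlock, if_true, Bool.false_eq_true, if_false,
          List.map_cons, List.cons_append, List.nil_append,
          List.cons.injEq, true_and] at h
      · rw [ih _ h]
      · exact absurd h.1 (by decide)
      · exact absurd h.1 (by decide)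
      · rw [ih _ h]

lemma bsBlock_transparent (hm : 2 ≤ |m|) (hn2 : 2 ≤ |n|) (v : List Bool) :
    BSTransparent m n (fun Q => 2 * Q) ((m * n).natAbs * v.length) (v.flatMap bsBlock) := by
  obtain ⟨r, hr, hrN⟩ : ∃ r : ℤ, (((m * n).natAbs * v.length : ℕ) : ℤ) = m * n * r ∧
      |r| = v.length := by
    rcases le_total 0 (m * n) with h | h
    · exact ⟨v.length, by push_cast; rw [abs_of_nonneg h], by simp⟩
    · exact ⟨-v.length, by push_cast; rw [abs_of_nonpos h]; ring, by simp⟩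
  refine ⟨bsBlock_flatMap_reduced hm v, ?_, fun L₁ L₂ h => ?_⟩
  · rw [hr]
    exact bsBlock_flatMap_conj r v
  · obtain ⟨q, hq, hq'⟩ := bsBlock_flatMap_split (m := m) (n := n) r v L₁ L₂ h
    -- every prefix is crossed by a power of exponent at least `|r| = N`, half the length of the word
    refine ⟨q, by rw [hr]; exact hq', fun Q hQ => Or.inl ?_⟩
    have hlen := congrArg List.length h
    rw [bsBlock_flatMap_length, List.length_append] at hlen
    have hrq : |r| ≤ |q| := by
      have key : ∀ x y : ℤ, 2 ≤ |x| → 2 ≤ |y| → |r| ≤ |x * y * r| := by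
        intro x y hx hy
        rw [abs_mul, abs_mul]
        have := mul_le_mul hx hy (by norm_num) (by positivity)
        nlinarith [abs_nonneg r]
      rcases hq with rfl | rfl | rfl
      · exact key _ _ hm hn2
      · exact key _ _ hn2 hn2
      · exact key _ _ hm hm
    have : (v.length : ℤ) ≤ Q := by rw [← hrN]; exact hrq.trans hQ
    omega

/-- For `m = ±1`, the power of `a` crossing a positive word grows exponentially with its length;
`conj_neg_unit` is the reverse statement for negative words. -/
lemma conj_pos_unit (hm : m * m = 1) (x : ℤ) {L : List BSLetter} (hL : ∀ y ∈ L, y.1 = 1) :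
    bsA m n ^ x * bsVal m n L = bsVal m n L * bsA m n ^ ((m * n) ^ L.length * x) := by
  induction L generalizing x with
  | nil => simp
  | cons y L ih =>
    obtain ⟨ε, e⟩ := y
    have hε : ε = 1 := hL _ List.mem_cons_self
    subst hε
    have h := conj_pos (m := m) (n := n) (m * x) e
    rw [← mul_assoc, hm, one_mul] at h
    rw [bsVal_cons, ← mul_assoc, h, mul_assoc, ih _ fun y hy => hL y (List.mem_cons_of_mem _ hy),
      mul_assoc, List.length_cons, show (m * n) ^ L.length * (n * (m * x)) =
        (m * n) ^ (L.length + 1) * x by ring]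

lemma conj_neg_unit (hm : m * m = 1) (x : ℤ) {L : List BSLetter} (hL : ∀ y ∈ L, y.1 = -1) :
    bsA m n ^ ((m * n) ^ L.length * x) * bsVal m n L = bsVal m n L * bsA m n ^ x := by
  induction L generalizing x with
  | nil => simp
  | cons y L ih =>
    obtain ⟨ε, e⟩ := y
    have hε : ε = -1 := hL _ List.mem_cons_self
    subst hε
    have h := conj_neg (m := m) (n := n) (m * ((m * n) ^ L.length * x)) e
    rw [← mul_assoc m m, hm, one_mul] at h
    rw [bsVal_cons, ← mul_assoc, List.length_cons, show (m * n) ^ (L.length + 1) * x =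
      n * (m * ((m * n) ^ L.length * x)) by ring, h, mul_assoc,
      ih _ fun y hy => hL y (List.mem_cons_of_mem _ hy), mul_assoc]

/-- The word `b ^ N · b a · b⁻¹ · b⁻¹ a ^ v₁ · b⁻¹ a ^ v₂ ⋯` used when `|m| = 1`. -/
def bsTower (v : List Bool) : List BSLetter :=
  (List.replicate v.length (1, false) ++ [(1, true)]) ++ (-1, false) :: v.map fun e => (-1, e)

lemma bsTower_length (v : List Bool) : (bsTower v).length = 2 * v.length + 2 := by
  simp [bsTower]
  ring

lemma bsTower_reduced (v : List Bool) : BSReduced m (bsTower v) := by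
  have h1 : ∀ x ∈ List.replicate v.length ((1 : ℤˣ), false) ++ [((1 : ℤˣ), true)], x.1 = 1 := by
    intro x hx
    rcases List.mem_append.1 hx with h | h
    · rw [List.eq_of_mem_replicate h]
    · rw [List.mem_singleton.1 h]
  have h2 : ∀ x ∈ ((-1 : ℤˣ), false) :: v.map fun e => ((-1 : ℤˣ), e), x.1 = -1 := by
    intro x hx
    rcases List.mem_cons.1 hx with h | h
    · rw [h]
    · obtain ⟨e, -, rfl⟩ := List.mem_map.1 h
      rfl
  refine List.isChain_append.2 ⟨?_, ?_, ?_⟩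
  · exact List.Pairwise.isChain (List.pairwise_of_forall_mem_list fun x hx y hy =>
      Or.inl ((h1 x hx).trans (h1 y hy).symm))
  · exact List.Pairwise.isChain (List.pairwise_of_forall_mem_list fun x hx y hy =>
      Or.inl ((h2 x hx).trans (h2 y hy).symm))
  · intro x hx y hy
    simp at hx
    subst hx
    exact Or.inr ⟨rfl, Or.inl rfl⟩

lemma bsTower_transparent (hm : m * m = 1) (hn2 : 2 ≤ |n|) (v : List Bool) :
    BSTransparent m n (fun Q => Q) 1 (bsTower v) := by
  have hν : 2 ≤ |m * n| := by
    have h1 : |m| * |m| = 1 := by rw [← abs_mul, hm, abs_one]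
    have h2 : |m| = 1 := by nlinarith [abs_nonneg m]
    rw [abs_mul, h2, one_mul]
    exact hn2
  have hpow : ∀ (h Q : ℕ), |(m * n) ^ h| ≤ Q → h ≤ Q := by
    intro h Q hQ
    have h1 : (2 : ℤ) ^ h ≤ |m * n| ^ h := pow_le_pow_left₀ (by norm_num) hν h
    rw [abs_pow] at hQ
    have h2 : 2 ^ h ≤ Q := by exact_mod_cast h1.trans hQ
    exact (Nat.lt_two_pow_self.le).trans h2
  have h1 : ∀ x ∈ List.replicate v.length ((1 : ℤˣ), false) ++ [((1 : ℤˣ), true)], x.1 = 1 := by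
    intro x hx
    rcases List.mem_append.1 hx with h | h
    · rw [List.eq_of_mem_replicate h]
    · rw [List.mem_singleton.1 h]
  have h2 : ∀ x ∈ ((-1 : ℤˣ), false) :: v.map fun e => ((-1 : ℤˣ), e), x.1 = -1 := by
    intro x hx
    rcases List.mem_cons.1 hx with h | h
    · rw [h]
    · obtain ⟨e, -, rfl⟩ := List.mem_map.1 h
      rfl
  have key : ∀ L₁ L₂, bsTower v = L₁ ++ L₂ → ∃ q : ℤ,
      bsA m n ^ (1 : ℤ) * bsVal m n L₁ = bsVal m n L₁ * bsA m n ^ q ∧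
        (q = (m * n) ^ L₁.length ∨ q = (m * n) ^ L₂.length) := by
    intro L₁ L₂ h
    rcases List.append_eq_append_iff.1 h with ⟨V, rfl, hV⟩ | ⟨V, hV, -⟩
    · refine ⟨(m * n) ^ L₂.length, ?_, Or.inr rfl⟩
      have hlen : (List.replicate v.length ((1 : ℤˣ), false) ++ [((1 : ℤˣ), true)]).length =
          V.length + L₂.length := by
        rw [← List.length_append, ← hV]
        simp
      rw [bsVal_append, ← mul_assoc, conj_pos_unit hm 1 h1, mul_assoc, hlen, mul_one, pow_add,
        conj_neg_unit hm _ fun y hy => h2 y (by rw [hV]; exact List.mem_append_left _ hy),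
        mul_assoc]
    · refine ⟨(m * n) ^ L₁.length, ?_, Or.inl rfl⟩
      rw [conj_pos_unit hm 1 fun y hy => h1 y (by rw [hV]; exact List.mem_append_left _ hy),
        mul_one]
  refine ⟨bsTower_reduced v, ?_, fun L₁ L₂ h => ?_⟩
  · obtain ⟨q, hq, hq'⟩ : ∃ q : ℤ, bsA m n ^ (1 : ℤ) * bsVal m n (bsTower v) =
        bsVal m n (bsTower v) * bsA m n ^ q ∧ q = 1 := by
      refine ⟨1, ?_, rfl⟩
      rw [bsTower, bsVal_append, ← mul_assoc, conj_pos_unit hm 1 h1, mul_assoc,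
        show (List.replicate v.length ((1 : ℤˣ), false) ++ [((1 : ℤˣ), true)]).length =
          (((-1 : ℤˣ), false) :: v.map fun e => ((-1 : ℤˣ), e)).length by simp,
        conj_neg_unit hm _ h2, mul_assoc]
    rw [hq'] at hq
    exact_mod_cast hq
  · obtain ⟨q, hq, hq'⟩ := key L₁ L₂ h
    refine ⟨q, by exact_mod_cast hq, fun Q hQ => ?_⟩
    rcases hq' with rfl | rfl
    · exact Or.inl (hpow _ _ hQ)
    · exact Or.inr (hpow _ _ hQ)

/-- The exponent in `b⁻¹ a ^ v₁ · b⁻¹ a ^ v₂ ⋯ = a ^ D · b ^ (-|v|)`, valid when `m = ±1`;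
it is a number with digits `0, 1` in base `m * n`. -/
def bsDigits (ν : ℤ) : List Bool → ℤ
  | [] => 0
  | e :: v => ν * (bsDigit e + bsDigits ν v)

lemma bsDigits_injective {ν : ℤ} (hν : 2 ≤ |ν|) : ∀ v v' : List Bool, v.length = v'.length →
    bsDigits ν v = bsDigits ν v' → v = v' := by
  have hν0 : ν ≠ 0 := by rintro rfl; simp at hν
  have hdvd : ∀ v, ν ∣ bsDigits ν v := by
    intro v
    cases v with
    | nil => exact dvd_zero _
    | cons e v => exact dvd_mul_right _ _
  have hν1 : ¬ ν ∣ 1 := fun h => by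
    have := Int.isUnit_iff_abs_eq.1 (isUnit_of_dvd_one h)
    omega
  intro v
  induction v with
  | nil => intro v' hl _; exact (List.length_eq_zero_iff.1 hl.symm).symm
  | cons e v ih =>
    intro v' hl h
    cases v' with
    | nil => simp at hl
    | cons e' v' =>
      have h1 := mul_left_cancel₀ hν0 h
      have hd := hdvd v
      have hd' := hdvd v'
      have hee : e = e' := by
        cases e <;> cases e' <;> simp [bsDigit] at h1 ⊢
        · exact hν1 ((Int.dvd_add_left hd').1 (h1 ▸ hd))
        · exact hν1 ((Int.dvd_add_left hd).1 (h1 ▸ hd'))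
      subst hee
      rw [ih v' (by simpa using hl) (add_left_cancel h1)]

lemma bsVal_map_neg (hm : m * m = 1) (v : List Bool) :
    bsVal m n (v.map fun e => (-1, e)) =
      bsA m n ^ bsDigits (m * n) v * (bsB m n)⁻¹ ^ v.length := by
  induction v with
  | nil => simp [bsDigits]
  | cons e v ih =>
    have h := (bs_semiconj (m := m) (n := n) (m * (bsDigit e + bsDigits (m * n) v))).inv_symm_left.eq
    rw [← mul_assoc m m, hm, one_mul] at h
    rw [List.map_cons, bsVal_cons, ih, bsLetterVal, bsDigits, List.length_cons, pow_succ',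
      show m * n * (bsDigit e + bsDigits (m * n) v) =
        n * (m * (bsDigit e + bsDigits (m * n) v)) by ring, ← mul_assoc (bsA m n ^ _),
      ← h, zpow_add]
    simp only [Units.val_neg, Units.val_one, zpow_neg, zpow_one, mul_assoc]

/-- There are exponentially many points spanning rectangles given by transparent words of linear
length. -/
lemma exists_transparent_family (hm : 1 ≤ |m|) (hn2 : 2 ≤ |n|) :
    ∃ (Lc : ℕ) (C : ℕ → ℕ), ∀ N : ℕ, ∃ P : Finset (BaumslagSolitar m n), P.card = 2 ^ N ∧
      ∀ X ∈ P, ∃ p L, BSTransparent m n C p L ∧ p ≤ Lc * (L.length + 1) ∧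
        p + L.length ≤ Lc * (N + 1) ∧ X = bsVal m n L * bsA m n ^ (p : ℤ) := by
  classical
  have hm0 : m ≠ 0 := by rintro rfl; simp at hm
  have hn0 : n ≠ 0 := by rintro rfl; simp at hn2
  have build : ∀ (N : ℕ) (g : List Bool → BaumslagSolitar m n),
      (∀ v v', v.length = N → v'.length = N → g v = g v' → v = v') →
      ∃ P : Finset (BaumslagSolitar m n), P.card = 2 ^ N ∧
        ∀ X ∈ P, ∃ v, v.length = N ∧ X = g v := by
    intro N g hg
    refine ⟨Finset.univ.image fun v : Fin N → Bool => g (List.ofFn v), ?_, ?_⟩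
    · rw [Finset.card_image_of_injective]
      · simp
      · intro v v' h
        exact List.ofFn_injective (hg _ _ (by simp) (by simp) h)
    · intro X hX
      obtain ⟨v, -, rfl⟩ := Finset.mem_image.1 hX
      exact ⟨List.ofFn v, by simp, rfl⟩
  rcases lt_or_ge |m| 2 with h | h
  · have hm1 : m * m = 1 := by
      rw [← abs_mul_abs_self, show |m| = 1 by omega, one_mul]
    refine ⟨3, fun Q => Q, fun N => ?_⟩
    obtain ⟨P, hP, hP'⟩ := build N (fun v => bsVal m n (bsTower v) * bsA m n ^ (1 : ℤ)) (by
      intro v v' hv hv' hvv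
      have h1 := mul_right_cancel hvv
      rw [bsTower, bsTower, hv, hv', bsVal_append, bsVal_append (_ ++ _) (_ :: v'.map _),
        bsVal_cons (-1, false), bsVal_cons (-1, false)] at h1
      have h2 := mul_left_cancel (mul_left_cancel h1)
      rw [bsVal_map_neg hm1, bsVal_map_neg hm1, hv, hv'] at h2
      refine bsDigits_injective ?_ v v' (hv.trans hv'.symm)
        (bsA_zpow_injective hm0 hn0 (mul_right_cancel h2))
      rw [abs_mul, show |m| = 1 by omega, one_mul]
      exact hn2)
    refine ⟨P, hP, fun X hX => ?_⟩
    obtain ⟨v, hv, rfl⟩ := hP' X hX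
    refine ⟨1, bsTower v, bsTower_transparent hm1 hn2 v, by omega, ?_, by simp⟩
    rw [bsTower_length, hv]
    omega
  · refine ⟨(m * n).natAbs + 2, fun Q => 2 * Q, fun N => ?_⟩
    obtain ⟨P, hP, hP'⟩ := build N (fun v => bsVal m n (v.flatMap bsBlock) *
        bsA m n ^ (((m * n).natAbs * N : ℕ) : ℤ)) (by
      intro v v' hv hv' hvv
      have h1 := mul_right_cancel hvv
      exact bsBlock_flatMap_injective v v' (signs_eq hm0 hn0 hn2 (i := 0) (j := 0) (i' := 0)
        (j' := 0) (bsBlock_flatMap_reduced h v) (bsBlock_flatMap_reduced h v') (by rw [h1])))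
    refine ⟨P, hP, fun X hX => ?_⟩
    obtain ⟨v, hv, rfl⟩ := hP' X hX
    subst hv
    refine ⟨_, v.flatMap bsBlock, bsBlock_transparent h hn2 v, ?_, ?_, rfl⟩
    · rw [bsBlock_flatMap_length]
      nlinarith [Nat.zero_le (m * n).natAbs, Nat.zero_le v.length,
        Nat.zero_le ((m * n).natAbs * v.length)]
    · rw [bsBlock_flatMap_length]
      nlinarith [Nat.zero_le (m * n).natAbs, Nat.zero_le v.length,
        Nat.zero_le ((m * n).natAbs * v.length)]

/-- Exponentially many points `X` are joined to `1` by two discrete paths of linear length which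
approach each other only near `1` and `X`. -/
lemma exists_bigons (hm : 1 ≤ |m|) (hn2 : 2 ≤ |n|) :
    ∃ Lc : ℕ, ∀ F : Set (BaumslagSolitar m n), F.Finite →
      ∃ F' : Set (BaumslagSolitar m n), F'.Finite ∧
      ∀ N : ℕ, ∃ P : Finset (BaumslagSolitar m n), P.card = 2 ^ N ∧ ∀ X ∈ P,
        ∃ (T : ℕ) (α β : ℕ → BaumslagSolitar m n), T ≤ Lc * (N + 1) ∧ α 0 = 1 ∧ β 0 = 1 ∧
          α T = X ∧ β T = X ∧
          (∀ i, (α i)⁻¹ * α (i + 1) ∈ bsSteps m n) ∧ (∀ i, (β i)⁻¹ * β (i + 1) ∈ bsSteps m n) ∧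
          ∀ i j, (α i)⁻¹ * β j ∈ F →
            α i ∈ F' ∨ X⁻¹ * α i ∈ F' ∨ β j ∈ F' ∨ X⁻¹ * β j ∈ F' := by
  have hm0 : m ≠ 0 := by rintro rfl; simp at hm
  have hn0 : n ≠ 0 := by rintro rfl; simp at hn2
  obtain ⟨Lc, C, h⟩ := exists_transparent_family hm hn2
  refine ⟨Lc, fun F hF => ?_⟩
  obtain ⟨F', hF', h'⟩ := BSTransparent.exists_paths hm0 hn0 hn2 Lc C hF
  refine ⟨F', hF', fun N => ?_⟩
  obtain ⟨P, hP, hPX⟩ := h N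
  refine ⟨P, hP, fun X hX => ?_⟩
  obtain ⟨p, L, hL, hp, hT, hXL⟩ := hPX X hX
  obtain ⟨α, β, h0, h0', h1, h1', hα, hβ, hαβ⟩ := h' p L hL hp X hXL
  exact ⟨p + L.length, α, β, hT, h0, h0', h1, h1', hα, hβ, hαβ⟩

end Families

/-! ### Cayley graphs and counting -/

/-- Balls of radius `r` in a graph of degree at most `D` have at most `(D + 1) ^ r` vertices. -/
lemma exists_finset_ball {V : Type*} {G : SimpleGraph V} (hG : G.Connected) {D : ℕ}
    (hD : ∀ v, (G.neighborSet v).encard ≤ D) (r : ℕ) (x : V) :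
    ∃ t : Finset V, t.card ≤ (D + 1) ^ r ∧ ∀ y, G.dist x y ≤ r → y ∈ t := by
  classical
  have key : ∀ (r : ℕ) (x : V), ∃ t : Finset V, t.card ≤ (D + 1) ^ r ∧
      ∀ y, ∀ w : G.Walk x y, w.length ≤ r → y ∈ t := by
    intro r
    induction r with
    | zero =>
      intro x
      refine ⟨{x}, by simp, fun y w hw => ?_⟩
      rw [Finset.mem_singleton]
      exact (w.eq_of_length_eq_zero (by omega)).symm
    | succ r ih =>
      intro x
      choose t ht ht' using ih
      have hfin : (G.neighborSet x).Finite :=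
        Set.finite_of_encard_le_coe (hD x)
      have hcard : hfin.toFinset.card ≤ D := by
        have := hD x
        rw [hfin.encard_eq_coe_toFinset_card] at this
        exact_mod_cast this
      refine ⟨insert x (hfin.toFinset.biUnion t), ?_, ?_⟩
      · have h1 := Finset.card_insert_le x (hfin.toFinset.biUnion t)
        have h2 := Finset.card_biUnion_le_card_mul hfin.toFinset t ((D + 1) ^ r) fun v _ => ht v
        have h3 : hfin.toFinset.card * (D + 1) ^ r ≤ D * (D + 1) ^ r :=
          Nat.mul_le_mul_right _ hcard
        have h4 : 1 ≤ (D + 1) ^ r := Nat.one_le_pow _ _ (by omega)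
        rw [pow_succ]
        nlinarith
      · intro y w hw
        cases w with
        | nil => exact Finset.mem_insert_self _ _
        | cons hadj w =>
          refine Finset.mem_insert_of_mem (Finset.mem_biUnion.2 ⟨_, hfin.mem_toFinset.2 hadj, ?_⟩)
          refine ht' _ y w ?_
          rw [Walk.length_cons] at hw
          omega
  obtain ⟨t, ht, ht'⟩ := key r x
  refine ⟨t, ht, fun y hy => ?_⟩
  obtain ⟨w, hw⟩ := hG.exists_walk_length_eq_dist x y
  exact ht' y w (hw.trans_le hy)

section Cayley

variable {G : Type*} [Group G] {S : Set G}

/-- Left multiplication as an endomorphism of the Cayley graph. -/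
def cayleyMulLeft (S : Set G) (g : G) : cayleyGraph G S →g cayleyGraph G S where
  toFun x := g * x
  map_rel' := by
    intro x y h
    simpa [cayleyGraph, mul_assoc] using h

lemma cayley_connected (hS : Subgroup.closure S = ⊤) : (cayleyGraph G S).Connected := by
  have key : ∀ g ∈ Subgroup.closure S, ∀ x : G, (cayleyGraph G S).Reachable x (x * g) := by
    intro g hg
    induction hg using Subgroup.closure_induction with
    | mem s hs =>
      intro x
      by_cases h : x = x * s
      · rw [← h]
      · exact Adj.reachable ((SimpleGraph.fromRel_adj _ _ _).2 ⟨h, Or.inl (by simpa using hs)⟩)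
    | one => intro x; rw [mul_one]
    | mul g h _ _ ihg ihh =>
      intro x
      rw [← mul_assoc]
      exact (ihg x).trans (ihh _)
    | inv g _ ih =>
      intro x
      have := (ih (x * g⁻¹)).symm
      rwa [inv_mul_cancel_right] at this
  rw [connected_iff_exists_forall_reachable]
  refine ⟨1, fun g => ?_⟩
  have := key g (by rw [hS]; trivial) 1
  rwa [one_mul] at this

lemma cayley_dist_mul_left (hS : Subgroup.closure S = ⊤) (g x y : G) :
    (cayleyGraph G S).dist (g * x) (g * y) = (cayleyGraph G S).dist x y := by
  have key : ∀ g x y : G, (cayleyGraph G S).dist (g * x) (g * y) ≤ (cayleyGraph G S).dist x y := by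
    intro g x y
    obtain ⟨w, hw⟩ := (cayley_connected hS).exists_walk_length_eq_dist x y
    rw [← hw, ← Walk.length_map (cayleyMulLeft S g) w]
    exact dist_le _
  refine le_antisymm (key g x y) ?_
  simpa using key g⁻¹ (g * x) (g * y)

lemma cayley_dist_eq (hS : Subgroup.closure S = ⊤) (x y : G) :
    (cayleyGraph G S).dist x y = (cayleyGraph G S).dist 1 (x⁻¹ * y) := by
  rw [← cayley_dist_mul_left hS x⁻¹ x y, inv_mul_cancel]

lemma cayley_bddDegree (hS : S.Finite) : BddDegree (cayleyGraph G S) := by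
  have hfin : (S ∪ S⁻¹).Finite := hS.union hS.inv
  refine ⟨hfin.toFinset.card, fun v => ?_⟩
  have hsub : (cayleyGraph G S).neighborSet v ⊆ (fun s => v * s) '' (S ∪ S⁻¹) := by
    intro w hw
    have hadj : v ≠ w ∧ (v⁻¹ * w ∈ S ∨ w⁻¹ * v ∈ S) := by
      rw [mem_neighborSet, cayleyGraph, SimpleGraph.fromRel_adj] at hw
      exact hw
    rcases hadj.2 with h | h
    · exact ⟨v⁻¹ * w, Or.inl h, by simp⟩
    · exact ⟨v⁻¹ * w, Or.inr (by simpa using h), by simp⟩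
  refine (Set.encard_le_encard hsub).trans ((Set.encard_image_le _ _).trans ?_)
  rw [hfin.encard_eq_coe_toFinset_card]

end Cayley

lemma exists_of_tendsto {ρ : ℕ → ℕ} (hρ : Filter.Tendsto ρ Filter.atTop Filter.atTop) (s : ℝ) :
    ∃ r : ℕ, ∀ t, (ρ t : ℝ) ≤ s → t ≤ r := by
  obtain ⟨k, hk⟩ := exists_nat_gt s
  obtain ⟨r, hr⟩ := Filter.eventually_atTop.1 (hρ.eventually_ge_atTop k)
  refine ⟨r, fun t ht => ?_⟩
  by_contra! h
  have h1 : (k : ℝ) ≤ ρ t := by exact_mod_cast hr t h.le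
  linarith

/-- Exponentially many points of a bounded degree graph cannot all be mapped close to a given
point by a map with fibres of bounded diameter. -/
lemma exists_image_far {V W : Type*} {Γ : SimpleGraph V} {Y : SimpleGraph W}
    (hΓ : Γ.Connected) (hΓb : BddDegree Γ) (hY : Y.Connected) (hYb : BddDegree Y)
    (f : V → W) (r₀ : ℕ) (hf : ∀ x y, f x = f y → Γ.dist x y ≤ r₀) :
    ∃ c : ℕ, ∀ (r : ℕ) (P : Finset V), P.card = 2 ^ (c * (r + 1)) → ∀ w, ∃ x ∈ P,
      r < Y.dist w (f x) := by
  classical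
  obtain ⟨D, hD⟩ := hΓb
  obtain ⟨D', hD'⟩ := hYb
  set B := (D + 1) ^ r₀ with hB
  refine ⟨D' + 1 + B, fun r P hP w => ?_⟩
  by_contra! hnear
  obtain ⟨t, ht, ht'⟩ := exists_finset_ball hY hD' r w
  have h1 : P.card ≤ B * t.card := by
    refine Finset.card_le_mul_card_image_of_maps_to (fun x hx => ht' _ (hnear x hx)) _ ?_
    intro b _
    rcases Finset.eq_empty_or_nonempty {x ∈ P | f x = b} with h | ⟨x₀, hx₀⟩
    · rw [h]; simp
    · obtain ⟨t₀, ht₀, ht₀'⟩ := exists_finset_ball hΓ hD r₀ x₀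
      refine (Finset.card_le_card fun x hx => ht₀' x (hf _ _ ?_)).trans ht₀
      rw [(Finset.mem_filter.1 hx).2, (Finset.mem_filter.1 hx₀).2]
  have h2 : B * t.card < 2 ^ B * 2 ^ ((D' + 1) * r) := by
    refine Nat.mul_lt_mul_of_lt_of_le Nat.lt_two_pow_self (ht.trans ?_) (by positivity)
    rw [pow_mul]
    exact Nat.pow_le_pow_left Nat.lt_two_pow_self.le r
  have h3 : 2 ^ B * 2 ^ ((D' + 1) * r) ≤ 2 ^ ((D' + 1 + B) * (r + 1)) := by
    rw [← pow_add]
    refine Nat.pow_le_pow_right (by norm_num) ?_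
    nlinarith [Nat.zero_le (B * r)]
  omega

/-- For `1 ≤ |m| ≤ |n|` and `|n| ≥ 2`, no Cayley graph of `BS(m,n)`
coarsely embeds into any `δ`-hyperbolic connected graph of uniformly bounded degree
(in particular, `BS(m,n)` does not coarsely embed into any hyperbolic group). -/
theorem baumslagSolitar_no_coarse_embedding
    (m n : ℤ) (hm : 1 ≤ |m|) (hmn : |m| ≤ |n|) (hn : 2 ≤ |n|) :
    ∀ S : Set (BaumslagSolitar m n), S.Finite → S⁻¹ = S → Subgroup.closure S = ⊤ →
      ∀ (W : Type*) (Y : SimpleGraph W), Y.Connected → BddDegree Y →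
        ∀ δ : ℝ, 1 ≤ δ → GraphHyperbolic Y δ →
          ∀ (f : BaumslagSolitar m n → W) (K : ℝ) (ρ : ℕ → ℕ),
            ¬ IsCoarseEmbedding (cayleyGraph (BaumslagSolitar m n) S) Y f K ρ := by
  intro S hS _ hgen W Y hY hYb δ hδ hyp f K ρ ⟨hK, hρ, hf⟩
  set Γ := cayleyGraph (BaumslagSolitar m n) S with hΓ
  have hΓc : Γ.Connected := cayley_connected hgen
  have hK0 : (0 : ℝ) ≤ K := by linarith
  have hfour : FourPoint (fun x y => (Y.dist x y : ℝ)) (4 * δ + 2) :=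
    { symm := fun x y => by rw [dist_comm]
      tri := fun x y z => by exact_mod_cast hY.dist_triangle
      self := fun x => by simp
      four := four_point hY hδ hyp }
  -- finite sets have bounded diameter, and their left translates have bounded images
  have hbdd : ∀ E : Set (BaumslagSolitar m n), E.Finite → ∃ R : ℝ, 0 ≤ R ∧
      ∀ x y, x⁻¹ * y ∈ E → (Y.dist (f x) (f y) : ℝ) ≤ R := by
    intro E hE
    obtain ⟨R, hR⟩ := (hE.image fun e => Γ.dist 1 e).bddAbove
    refine ⟨K * R, by positivity, fun x y hxy => ((hf x y).2).trans ?_⟩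
    refine mul_le_mul_of_nonneg_left ?_ hK0
    rw [hΓ, cayley_dist_eq hgen]
    exact_mod_cast hR ⟨_, hxy, rfl⟩
  obtain ⟨R₁, hR₁, hstep⟩ := hbdd _ (bsSteps_finite m n)
  obtain ⟨r₀, hr₀⟩ := exists_of_tendsto hρ 0
  obtain ⟨c, hc⟩ := exists_image_far hΓc (cayley_bddDegree hS) hY hYb f r₀ (by
    intro x y hxy
    refine hr₀ _ ((hf x y).1.trans ?_)
    rw [hxy]
    simp)
  obtain ⟨Lc, hLc⟩ := exists_bigons hm hn
  -- the paths have length at most `Lc * (c * (r + 1) + 1)`, their endpoints have distance `> r`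
  obtain ⟨s, hs⟩ := no_fat_bigon hfour hR₁ (show (0 : ℝ) ≤ Lc * (c + 1) by positivity)
  obtain ⟨r, hr⟩ := exists_of_tendsto hρ s
  have hball : {g | Γ.dist 1 g ≤ r}.Finite := by
    obtain ⟨D, hD⟩ := cayley_bddDegree hS
    obtain ⟨t, -, ht⟩ := exists_finset_ball hΓc hD r 1
    exact t.finite_toSet.subset fun g hg => ht g hg
  obtain ⟨F', hF', hbig⟩ := hLc _ hball
  obtain ⟨A, -, hA⟩ := hbdd F' hF'
  obtain ⟨ℓ₀, hℓ₀⟩ := hs A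
  obtain ⟨r', hr'⟩ := exists_nat_ge ℓ₀
  obtain ⟨P, hP, hPX⟩ := hbig (c * (r' + 1))
  obtain ⟨X, hX, hfar⟩ := hc r' P hP (f 1)
  obtain ⟨T, α, β, hT, hα0, hβ0, hαT, hβT, hα, hβ, hαβ⟩ := hPX X hX
  have hTΛ : (T : ℝ) ≤ Lc * (c + 1) * Y.dist (f 1) (f X) := by
    have h1 : T ≤ Lc * (c + 1) * Y.dist (f 1) (f X) := by
      refine hT.trans ?_
      rw [mul_assoc]
      refine Nat.mul_le_mul_left _ ?_
      nlinarith [Nat.zero_le c]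
    exact_mod_cast h1
  have hfarR : ((r' : ℕ) : ℝ) ≤ Y.dist (f 1) (f X) := by exact_mod_cast hfar.le
  obtain ⟨i, -, j, -, hij, hi1, hiX, hj1, hjX⟩ := hℓ₀ (f 1) (f X) (fun i => f (α i))
    (fun i => f (β i)) T T (hr'.trans hfarR) hTΛ hTΛ (by rw [hα0]) (by rw [hαT]) (by rw [hβ0])
    (by rw [hβT]) (fun i => hstep _ _ (hα i)) (fun i => hstep _ _ (hβ i))
  have hmem : (α i)⁻¹ * β j ∈ {g | Γ.dist 1 g ≤ r} := by
    have h := hr _ ((hf (α i) (β j)).1.trans hij)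
    rw [hΓ, cayley_dist_eq hgen] at h
    exact h
  rcases hαβ i j hmem with h | h | h | h
  · exact absurd (hA 1 (α i) (by simpa using h)) (not_le.2 hi1)
  · exact absurd (hA X (α i) h) (not_le.2 hiX)
  · exact absurd (hA 1 (β j) (by simpa using h)) (not_le.2 hj1)
  · exact absurd (hA X (β j) h) (not_le.2 hjX)
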